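/- arXiv:2306.10922 — 3 statements merged into one kernel-verified Lean document; each statement's English description precedes it below -/
import Mathlib

section
/- Let (X,ρ) be a bounded metric space and μ a Borel probability measure supported on X such that μ(B_ρ(u,r)) ≤ C₁ r^κ for all u ∈ X and all r > 0, for some constants C₁ > 0 and κ > 0. Then for every θ > 0 there exists a constant C₂ > 0 such that for all r ∈ (0, diam(X)): sup_{v ∈ X} ∫_X (max{ρ(u,v), r})^{−θ} dμ(u) ≤ C₂ · φ_{θ−κ}(r). -/
open MeasureTheory Set ENNReal

/-- The radial kernel `φ_α` : `r^{-α}` for `α > 0`, `log(e / (r ⊓ 1))` for `α = 0`,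
and `1` for `α < 0`. -/
noncomputable def radialKernel (α : ℝ) (r : ℝ) : ℝ≥0∞ :=
  if 0 < α then ENNReal.ofReal r ^ (-α)
  else if α = 0 then ENNReal.ofReal (Real.log (Real.exp 1 / min r 1))
  else 1

/-- The `φ_α`-energy of a measure `μ` with respect to the distance function `ρ`. -/
noncomputable def energy {X : Type*} [MeasurableSpace X] (ρ : X → X → ℝ) (α : ℝ)
    (μ : MeasureTheory.Measure X) : ℝ≥0∞ :=
  ∫⁻ u, ∫⁻ v, radialKernel α (ρ u v) ∂μ ∂μ

/-- The Bessel–Riesz capacity of order `α` of `G` with respect to the distance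
function `ρ`: the reciprocal of the infimum of `φ_α`-energies over probability
measures carried by `G` (equal to `0` if every such energy is infinite). -/
noncomputable def capacity {X : Type*} [MeasurableSpace X] (ρ : X → X → ℝ) (α : ℝ)
    (G : Set X) : ℝ≥0∞ :=
  (⨅ (μ : MeasureTheory.Measure X) (_ : MeasureTheory.IsProbabilityMeasure μ)
    (_ : μ Gᶜ = 0), energy ρ α μ)⁻¹


lemma aux_sum (D α : ℝ) (hD : 0 < D) : ∃ C : ℝ, 0 < C ∧ ∀ r : ℝ, 0 < r → r < D → ∀ N : ℕ,
    (2:ℝ) ^ N ≤ D / r →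
    ENNReal.ofReal (∑ k ∈ Finset.range (N + 1), ((2:ℝ) ^ α) ^ k) ≤
      ENNReal.ofReal C * radialKernel α r := by
  rcases lt_trichotomy α 0 with h | h | h
  · have hq : (2:ℝ) ^ α < 1 := Real.rpow_lt_one_of_one_lt_of_neg (by norm_num) h
    have hq0 : 0 < (2:ℝ) ^ α := by positivity
    refine ⟨1 / (1 - (2:ℝ) ^ α), by apply one_div_pos.2; linarith, ?_⟩
    intro r hr hrD N hN
    have : radialKernel α r = 1 := by
      simp [radialKernel, h.ne, not_lt.2 h.le]
    rw [this, mul_one]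
    apply ENNReal.ofReal_le_ofReal
    rw [geom_sum_eq hq.ne, ← neg_div_neg_eq]
    have : 0 < (2:ℝ) ^ α ^ (N+1) := by positivity
    have h2 : 0 < ((2:ℝ) ^ α) ^ (N+1) := by positivity
    rw [neg_sub, neg_sub]
    apply div_le_div_of_nonneg_right _ (by linarith)
    linarith
  · subst h
    have hl2 : 0 < Real.log 2 := Real.log_pos (by norm_num)
    refine ⟨|Real.log D| / Real.log 2 + 1 / Real.log 2 + 1, by positivity, ?_⟩
    intro r hr hrD N hN
    have hm : 0 < min r 1 := by positivity
    have : radialKernel 0 r = ENNReal.ofReal (1 - Real.log (min r 1)) := by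
      simp only [radialKernel, lt_irrefl, if_true, if_false]
      rw [Real.log_div (Real.exp_pos 1).ne' hm.ne', Real.log_exp]
    rw [this, ← ENNReal.ofReal_mul (by positivity)]
    apply ENNReal.ofReal_le_ofReal
    have hL : Real.log (min r 1) ≤ 0 := Real.log_nonpos hm.le (min_le_right _ _)
    have hL2 : Real.log (min r 1) ≤ Real.log r := Real.log_le_log hm (min_le_left _ _)
    have h3 := Real.log_le_log (by positivity) hN
    rw [Real.log_pow, Real.log_div hD.ne' hr.ne'] at h3
    have h4 : (N:ℝ) ≤ (|Real.log D| + (1 - Real.log (min r 1))) / Real.log 2 := by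
      rw [le_div_iff₀ hl2]
      have := le_abs_self (Real.log D)
      linarith
    simp only [Real.rpow_zero, one_pow, Finset.sum_const, Finset.card_range, nsmul_eq_mul, mul_one]
    push_cast
    rw [add_div] at h4
    have h5 : 0 ≤ |Real.log D| / Real.log 2 := by positivity
    set L := 1 - Real.log (min r 1)
    have h6 : 1 ≤ L := by simp only [L]; linarith
    have h7 : L / Real.log 2 = 1 / Real.log 2 * L := by ring
    nlinarith
  · have hq : 1 < (2:ℝ) ^ α := Real.one_lt_rpow (by norm_num) h
    have hq0 : 0 < (2:ℝ) ^ α - 1 := by linarith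
    refine ⟨(2:ℝ) ^ α * D ^ α / ((2:ℝ) ^ α - 1), by positivity, ?_⟩
    intro r hr hrD N hN
    have : radialKernel α r = ENNReal.ofReal (r ^ (-α)) := by
      simp only [radialKernel, h, if_true]
      rw [ENNReal.ofReal_rpow_of_pos hr]
    rw [this, ← ENNReal.ofReal_mul (by positivity)]
    apply ENNReal.ofReal_le_ofReal
    rw [geom_sum_eq hq.ne', div_mul_eq_mul_div]
    apply div_le_div_of_nonneg_right _ hq0.le
    have h1 : ((2:ℝ) ^ α) ^ N ≤ D ^ α * r ^ (-α) := by
      rw [Real.rpow_neg hr.le, ← div_eq_mul_inv, ← Real.div_rpow hD.le hr.le, Real.rpow_pow_comm (by norm_num)]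
      exact Real.rpow_le_rpow (by positivity) hN h.le
    rw [pow_succ, mul_assoc]
    nlinarith

lemma aux_real (D C₁ κ θ : ℝ) (hD : 0 < D) (k : ℕ) :
    (D / 2 ^ (k+1)) ^ (-θ) * (C₁ * (2 * D / 2 ^ k) ^ κ) =
      ((D / 2) ^ (-θ) * (C₁ * (2 * D) ^ κ)) * ((2:ℝ) ^ (θ - κ)) ^ k := by
  have e : D / 2 ^ (k+1) = (D / 2) / 2 ^ k := by rw [pow_succ]; field_simp
  rw [e, Real.div_rpow (by positivity : 0 ≤ D / 2) (by positivity),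
    Real.div_rpow (by positivity : 0 ≤ 2 * D) (by positivity), Real.rpow_pow_comm (by norm_num),
    Real.rpow_sub (by positivity), Real.rpow_neg (by positivity : (0:ℝ) ≤ 2 ^ k)]
  field_simp

/-- If `(X,ρ)` is a bounded metric space and `μ` a Borel probability
measure on `X` with `μ(B(u,r)) ≤ C₁ r^κ` for all `u` and `r > 0`, then for every
`θ > 0` there is `C₂ > 0` with
`sup_v ∫ (max(ρ(u,v), r))^{-θ} dμ(u) ≤ C₂ φ_{θ-κ}(r)` for all `0 < r < diam X`. -/
theorem statement0 {X : Type*} [MetricSpace X] [MeasurableSpace X] [BorelSpace X]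
    (hX : Bornology.IsBounded (Set.univ : Set X))
    (μ : Measure X) [IsProbabilityMeasure μ]
    (C₁ κ : ℝ) (hC₁ : 0 < C₁) (hκ : 0 < κ)
    (hball : ∀ u : X, ∀ r : ℝ, 0 < r → μ (Metric.ball u r) ≤ ENNReal.ofReal (C₁ * r ^ κ))
    (θ : ℝ) (hθ : 0 < θ) :
    ∃ C₂ : ℝ, 0 < C₂ ∧ ∀ r : ℝ, 0 < r → r < Metric.diam (Set.univ : Set X) →
      ∀ v : X, ∫⁻ u, (ENNReal.ofReal (max (dist u v) r)) ^ (-θ) ∂μ ≤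
        ENNReal.ofReal C₂ * radialKernel (θ - κ) r := by
  by_cases hD : 0 < Metric.diam (Set.univ : Set X)
  swap
  · exact ⟨1, one_pos, fun r h1 h2 => absurd (h1.trans h2) hD⟩
  set D := Metric.diam (Set.univ : Set X) with hDdef
  obtain ⟨C, hC, H⟩ := aux_sum D (θ - κ) hD
  have hA : 0 < (D / 2) ^ (-θ) * (C₁ * (2 * D) ^ κ) := by positivity
  refine ⟨((D / 2) ^ (-θ) * (C₁ * (2 * D) ^ κ)) * C, by positivity, ?_⟩
  intro r hr hrD v
  obtain ⟨N, hN1, hN2⟩ := exists_nat_pow_near (x := D / r) (y := (2:ℝ))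
    ((one_le_div hr).2 hrD.le) (by norm_num)
  have hpt : ∀ u, (ENNReal.ofReal (max (dist u v) r)) ^ (-θ) ≤
      ∑ k ∈ Finset.range (N + 1), (Metric.ball v (2 * D / 2 ^ k)).indicator
        (fun _ => ENNReal.ofReal ((D / 2 ^ (k+1)) ^ (-θ))) u := by
    intro u
    have hd : dist u v ≤ D := Metric.dist_le_diam_of_mem hX (mem_univ _) (mem_univ _)
    have hs : 0 < max (dist u v) r := lt_max_of_lt_right hr
    have hsD : max (dist u v) r ≤ D := max_le hd hrD.le
    have hds : dist u v ≤ max (dist u v) r := le_max_left _ _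
    have hrs : r ≤ max (dist u v) r := le_max_right _ _
    set s := max (dist u v) r
    obtain ⟨k, hk1, hk2⟩ := exists_nat_pow_near (x := D / s) (y := (2:ℝ))
      ((one_le_div hs).2 hsD) (by norm_num)
    have hkN : k < N + 1 := by
      have : (2:ℝ) ^ k < 2 ^ (N+1) :=
        (hk1.trans (div_le_div_of_nonneg_left hD.le hr hrs)).trans_lt hN2
      exact (pow_lt_pow_iff_right₀ (by norm_num)).1 this
    have hp : (0:ℝ) < 2 ^ k := by positivity
    rw [le_div_iff₀ hs] at hk1
    rw [div_lt_iff₀ hs] at hk2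
    have hmem : u ∈ Metric.ball v (2 * D / 2 ^ k) := by
      rw [Metric.mem_ball, lt_div_iff₀ hp]
      nlinarith
    refine le_trans ?_ (Finset.single_le_sum (fun _ _ => zero_le) (Finset.mem_range.2 hkN))
    rw [indicator_of_mem hmem, ENNReal.ofReal_rpow_of_pos hs]
    apply ENNReal.ofReal_le_ofReal
    apply Real.rpow_le_rpow_of_nonpos (by positivity) _ (by linarith)
    rw [div_le_iff₀ (by positivity)]
    linarith
  calc _ ≤ ∫⁻ u, ∑ k ∈ Finset.range (N + 1), (Metric.ball v (2 * D / 2 ^ k)).indicator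
        (fun _ => ENNReal.ofReal ((D / 2 ^ (k+1)) ^ (-θ))) u ∂μ := lintegral_mono hpt
    _ = ∑ k ∈ Finset.range (N + 1),
        ENNReal.ofReal ((D / 2 ^ (k+1)) ^ (-θ)) * μ (Metric.ball v (2 * D / 2 ^ k)) := by
      rw [lintegral_finsetSum _ (fun k _ => measurable_const.indicator measurableSet_ball)]
      refine Finset.sum_congr rfl fun k _ => ?_
      rw [lintegral_indicator_const measurableSet_ball]
    _ ≤ ∑ k ∈ Finset.range (N + 1),
        ENNReal.ofReal (((D / 2) ^ (-θ) * (C₁ * (2 * D) ^ κ)) * ((2:ℝ) ^ (θ - κ)) ^ k) := by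
      refine Finset.sum_le_sum fun k _ => ?_
      rw [← aux_real D C₁ κ θ hD k, ENNReal.ofReal_mul (by positivity)]
      gcongr
      exact hball v _ (by positivity)
    _ = ENNReal.ofReal ((D / 2) ^ (-θ) * (C₁ * (2 * D) ^ κ)) *
        ENNReal.ofReal (∑ k ∈ Finset.range (N + 1), ((2:ℝ) ^ (θ - κ)) ^ k) := by
      rw [← ENNReal.ofReal_sum_of_nonneg (fun k _ => by positivity), ← Finset.mul_sum,
        ENNReal.ofReal_mul hA.le]
    _ ≤ _ := by
      rw [ENNReal.ofReal_mul hA.le, mul_assoc]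
      gcongr
      exact H r hr hrD N hN1
end

section
/- Let (X₁,ρ₁) and (X₂,ρ₂) be bounded metric spaces and let ρ₃ be the metric on X₁ × X₂ given by ρ₃((u,x),(v,y)) = max{ρ₁(u,v), ρ₂(x,y)}. Let α > 0, Gᵢ ⊆ Xᵢ for i = 1,2, and assume G₁ is γ₁-Ahlfors–David regular. If γ₁ < α, then there exists a constant c > 0 such that ℋ^{α}_{ρ₃}(G₁ × G₂) ≤ c · ℋ^{α−γ₁}_{ρ₂}(G₂). -/
open MeasureTheory Set ENNReal

/-- The `β`-dimensional Hausdorff measure of `G` with respect to the distance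
function `ρ`, defined via countable coverings by `ρ`-balls of radii at most `δ`,
letting `δ → 0` (i.e. taking the supremum over `δ > 0`). -/
noncomputable def hMeasure {X : Type*} (ρ : X → X → ℝ) (β : ℝ) (G : Set X) : ℝ≥0∞ :=
  ⨆ (δ : ℝ) (_ : 0 < δ), ⨅ (c : ℕ → X) (r : ℕ → ℝ)
    (_ : ∀ n, 0 < r n ∧ r n ≤ δ) (_ : G ⊆ ⋃ n, {y | ρ y (c n) < r n}),
    ∑' n, ENNReal.ofReal ((2 * r n) ^ β)

/-- `G` is `γ`-Ahlfors–David regular: there is a finite positive Borel measure `μ`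
supported on `G` and a constant `c ≥ 1` such that
`c⁻¹ r^γ ≤ μ(B(a,r)) ≤ c r^γ` for all `a ∈ G` and `0 < r ≤ 1`. -/
def AhlforsRegular {X : Type*} [MetricSpace X] [MeasurableSpace X] (γ : ℝ)
    (G : Set X) : Prop :=
  ∃ (μ : MeasureTheory.Measure X) (c : ℝ), 1 ≤ c ∧ μ ≠ 0 ∧
    MeasureTheory.IsFiniteMeasure μ ∧ μ Gᶜ = 0 ∧
    ∀ a ∈ G, ∀ r : ℝ, 0 < r → r ≤ 1 →
      ENNReal.ofReal (c⁻¹ * r ^ γ) ≤ μ (Metric.ball a r) ∧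
      μ (Metric.ball a r) ≤ ENNReal.ofReal (c * r ^ γ)

theorem aux_pack {X₁ : Type*} [MetricSpace X₁] [MeasurableSpace X₁] [BorelSpace X₁]
    (G₁ : Set X₁) (γ : ℝ) (hreg : AhlforsRegular γ G₁) :
    ∃ K : ℝ, 0 < K ∧ ∀ r : ℝ, 0 < r → r ≤ 1 → ∃ S : Finset X₁, S.Nonempty ∧
      (S.card : ℝ) * r ^ γ ≤ K ∧ ∀ y ∈ G₁, ∃ a ∈ S, dist y a < r := by
  classical
  obtain ⟨μ, c, hc, hμ0, hfin, hμG, hball⟩ := hreg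
  have hne : G₁.Nonempty := by
    by_contra h
    rw [Set.not_nonempty_iff_eq_empty] at h
    subst h
    rw [Set.compl_empty] at hμG
    exact hμ0 (Measure.measure_univ_eq_zero.mp hμG)
  have hc0 : 0 < c := by linarith
  set m := (μ Set.univ).toReal with hm
  have hm0 : 0 ≤ m := ENNReal.toReal_nonneg
  have h2 : (0:ℝ) < 2 ^ γ := by positivity
  refine ⟨m * c * 2 ^ γ + 1, by positivity, fun r hr hr1 => ?_⟩
  have hrγ : 0 < r ^ γ := Real.rpow_pos_of_pos hr _
  have bound : ∀ S : Finset X₁, (↑S : Set X₁) ⊆ G₁ →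
      (∀ a ∈ S, ∀ b ∈ S, a ≠ b → r ≤ dist a b) → (S.card : ℝ) * r ^ γ ≤ m * c * 2 ^ γ := by
    intro S hS hsep
    have h1 : μ (⋃ a ∈ S, Metric.ball a (r/2)) = ∑ a ∈ S, μ (Metric.ball a (r/2)) := by
      apply measure_biUnion_finset
      · intro a ha b hb hab
        apply Metric.ball_disjoint_ball
        have := hsep a ha b hb hab
        linarith
      · intro a _
        exact Metric.isOpen_ball.measurableSet
    have h3 : ∑ a ∈ S, ENNReal.ofReal (c⁻¹ * (r/2) ^ γ) ≤ μ Set.univ := by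
      calc _ ≤ ∑ a ∈ S, μ (Metric.ball a (r/2)) :=
            Finset.sum_le_sum fun a ha => (hball a (hS ha) (r/2) (by linarith) (by linarith)).1
        _ = _ := h1.symm
        _ ≤ _ := measure_mono (Set.subset_univ _)
    rw [Finset.sum_const, nsmul_eq_mul] at h3
    have h4 := ENNReal.toReal_mono (measure_ne_top μ _) h3
    rw [ENNReal.toReal_mul, ENNReal.toReal_natCast, ENNReal.toReal_ofReal (by positivity),
      Real.div_rpow hr.le (by norm_num), ← hm] at h4
    calc (S.card : ℝ) * r ^ γ = (S.card * (c⁻¹ * (r ^ γ / 2 ^ γ))) * (c * 2 ^ γ) := by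
          field_simp
      _ ≤ m * (c * 2 ^ γ) := by gcongr
      _ = _ := by ring
  let P : ℕ → Prop := fun k => ∃ S : Finset X₁, (↑S : Set X₁) ⊆ G₁ ∧
      (∀ a ∈ S, ∀ b ∈ S, a ≠ b → r ≤ dist a b) ∧ S.card = k
  obtain ⟨M, hM⟩ := exists_nat_ge (m * c * 2 ^ γ / r ^ γ)
  have hPM : ∀ k, P k → k ≤ M := by
    rintro k ⟨S, hS, hsep, rfl⟩
    have := bound S hS hsep
    rw [← le_div_iff₀ hrγ] at this
    exact_mod_cast this.trans hM
  have hP0 : P 0 := ⟨∅, by simp, by simp, rfl⟩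
  obtain ⟨S, hS, hsep, hcard⟩ : P (Nat.findGreatest P M) :=
    Nat.findGreatest_spec (Nat.zero_le M) hP0
  have hcov : ∀ y ∈ G₁, ∃ a ∈ S, dist y a < r := by
    intro y hy
    by_contra! hcon
    have hyS : y ∉ S := fun h => by
      have := hcon y h
      rw [dist_self] at this
      linarith
    have hPs : P (S.card + 1) := by
      refine ⟨insert y S, ?_, ?_, Finset.card_insert_of_notMem hyS⟩
      · rw [Finset.coe_insert]
        exact Set.insert_subset hy hS
      · intro a ha b hb hab
        rw [Finset.mem_insert] at ha hb
        rcases ha with rfl | ha <;> rcases hb with rfl | hb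
        · exact absurd rfl hab
        · exact hcon b hb
        · rw [dist_comm]; exact hcon a ha
        · exact hsep a ha b hb hab
    have := Nat.le_findGreatest (hPM _ hPs) hPs
    omega
  refine ⟨S, ?_, (bound S hS hsep).trans (by linarith), hcov⟩
  obtain ⟨y, hy⟩ := hne
  obtain ⟨a, ha, -⟩ := hcov y hy
  exact ⟨a, ha⟩

/-- If `G₁` is `γ₁`-Ahlfors–David regular with `0 < γ₁ < α`, then
`ℋ^{α}_{ρ₃}(G₁ × G₂) ≤ c ℋ^{α-γ₁}_{ρ₂}(G₂)`. -/
theorem statement5 {X₁ X₂ : Type*} [MetricSpace X₁] [MetricSpace X₂]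
    [MeasurableSpace X₁] [BorelSpace X₁]
    (hX₁ : Bornology.IsBounded (Set.univ : Set X₁))
    (hX₂ : Bornology.IsBounded (Set.univ : Set X₂))
    (α : ℝ) (hα : 0 < α) (G₁ : Set X₁) (G₂ : Set X₂)
    (γ₁ : ℝ) (hγ₁ : 0 < γ₁) (hreg : AhlforsRegular γ₁ G₁) (hγα : γ₁ < α) :
    ∃ c : ℝ, 0 < c ∧
      hMeasure (fun p q : X₁ × X₂ => max (dist p.1 q.1) (dist p.2 q.2)) α (G₁ ×ˢ G₂) ≤
        ENNReal.ofReal c * hMeasure (fun x y : X₂ => dist x y) (α - γ₁) G₂ := by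
  obtain ⟨K, hK, hpack⟩ := aux_pack G₁ γ₁ hreg
  have hC : 0 < K * 2 ^ γ₁ := by positivity
  refine ⟨K * 2 ^ γ₁, hC, ?_⟩
  have hC0 : ENNReal.ofReal (K * 2 ^ γ₁) ≠ 0 := (ENNReal.ofReal_pos.mpr hC).ne'
  have hCt : ENNReal.ofReal (K * 2 ^ γ₁) ≠ ⊤ := ENNReal.ofReal_ne_top
  rw [hMeasure]
  refine iSup₂_le fun δ hδ => ?_
  have hδ' : 0 < min δ 1 := lt_min hδ one_pos
  refine le_trans ?_ (mul_le_mul_right (le_iSup₂_of_le (min δ 1) hδ' le_rfl) _)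
  simp only [ENNReal.mul_iInf_of_ne hC0 hCt]
  refine le_iInf fun c => le_iInf fun r => le_iInf fun hr => le_iInf fun hcov => ?_
  choose S hSne hScard hScov using fun n => hpack (r n) (hr n).1 ((hr n).2.trans (min_le_right _ _))
  have hne : ∀ n, Nonempty (S n) := fun n => (hSne n).to_subtype
  have : Infinite (Σ n, S n) := Infinite.of_surjective Sigma.fst
    (fun n => ⟨⟨n, (hne n).some⟩, rfl⟩)
  obtain ⟨e⟩ : Nonempty (ℕ ≃ Σ n, S n) := nonempty_equiv_of_countable
  refine iInf_le_of_le (fun k => ((e k).2.1, c (e k).1)) <|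
    iInf_le_of_le (fun k => r (e k).1) <|
    iInf_le_of_le (fun k => ⟨(hr _).1, (hr _).2.trans (min_le_left _ _)⟩) <|
    iInf_le_of_le ?_ ?_
  · rintro ⟨x, y⟩ ⟨hx, hy⟩
    obtain ⟨n, hn⟩ := Set.mem_iUnion.mp (hcov hy)
    obtain ⟨a, ha, hxa⟩ := hScov n x hx
    obtain ⟨k, hk⟩ := e.surjective ⟨n, ⟨a, ha⟩⟩
    refine Set.mem_iUnion.mpr ⟨k, ?_⟩
    change max (dist x (e k).2.1) (dist y (c (e k).1)) < r (e k).1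
    rw [hk]
    exact max_lt hxa hn
  · rw [e.tsum_eq (fun p : Σ n, S n => ENNReal.ofReal ((2 * r p.1) ^ α)),
      ENNReal.tsum_sigma', ← ENNReal.tsum_mul_left]
    refine ENNReal.tsum_le_tsum fun n => ?_
    have hrn := (hr n).1
    simp only [tsum_fintype, Finset.sum_const, nsmul_eq_mul, Finset.card_univ, Fintype.card_coe]
    rw [← ENNReal.ofReal_natCast, ← ENNReal.ofReal_mul (by positivity),
      ← ENNReal.ofReal_mul hC.le]
    apply ENNReal.ofReal_le_ofReal
    have h1 : (2 * r n) ^ α = r n ^ γ₁ * 2 ^ γ₁ * (2 * r n) ^ (α - γ₁) := by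
      rw [mul_comm (r n ^ γ₁), ← Real.mul_rpow (by norm_num) hrn.le,
        ← Real.rpow_add (by positivity)]
      congr 1; ring
    rw [h1]
    calc _ = ((S n).card * r n ^ γ₁) * (2 ^ γ₁ * (2 * r n) ^ (α - γ₁)) := by ring
      _ ≤ K * (2 ^ γ₁ * (2 * r n) ^ (α - γ₁)) := by gcongr; exact hScard n
      _ = _ := by ring
end

section
/- Let B^H = {B^H(t), t ∈ [0,1]} be a d-dimensional fractional Brownian motion of Hurst index H ∈ (0,1), let I = [a,b] with 0 < a < b ≤ 1, and let f : I → ℝ^d be H-Hölder continuous. Then for any compact sets E ⊆ I and F ⊆ ℝ^d there exists a constant c ≥ 1 (depending only on I, F, H and f) such that c^{−1} · C^{d}_{ρ_{d_H}}(E × F) ≤ ℙ{(B^H + f)(E) ∩ F ≠ ∅} ≤ c · ℋ^{d}_{ρ_{d_H}}(E × F). -/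
open MeasureTheory Set ENNReal

/-- Covariance function of fractional Brownian motion of Hurst index `H`. -/
noncomputable def fbmCov (H s t : ℝ) : ℝ :=
  (|s| ^ (2 * H) + |t| ^ (2 * H) - |t - s| ^ (2 * H)) / 2

/-- `B` is a `d`-dimensional fractional Brownian motion of Hurst index `H` on `[0,1]`
under the probability measure `ℙ`: its coordinates are independent copies of a
real-valued centered Gaussian process with continuous sample paths, starting at `0`,
whose covariance is `fbmCov H`. -/
structure IsFBM {Ω : Type*} [MeasurableSpace Ω] (ℙ : MeasureTheory.Measure Ω)
    (H : ℝ) (d : ℕ) (B : Ω → ℝ → EuclideanSpace ℝ (Fin d)) : Prop where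
  meas : ∀ t : ℝ, Measurable fun ω => B ω t
  cont : ∀ ω, ContinuousOn (fun t => B ω t) (Set.Icc 0 1)
  start : ∀ ω, B ω 0 = 0
  indep : ProbabilityTheory.iIndepFun
      (fun (i : Fin d) (ω : Ω) => fun t : ℝ => B ω t i) ℙ
  gaussian : ∀ i : Fin d, ∀ (n : ℕ) (t : Fin n → ℝ) (a : Fin n → ℝ),
      (∀ j, t j ∈ Set.Icc (0 : ℝ) 1) →
      ∃ v : NNReal, (v : ℝ) = ∑ j, ∑ k, a j * a k * fbmCov H (t j) (t k) ∧
        MeasureTheory.Measure.map (fun ω => ∑ j, a j * B ω (t j) i) ℙ =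
          ProbabilityTheory.gaussianReal 0 v

/-- The parabolic metric `ρ_{d_H}((s,x),(t,y)) = max(|t-s|^H, ‖x-y‖)` on `ℝ × ℝ^d`. -/
noncomputable def parabolicDist (H : ℝ) {d : ℕ}
    (p q : ℝ × EuclideanSpace ℝ (Fin d)) : ℝ :=
  max (|p.1 - q.1| ^ H) (dist p.2 q.2)

/-- `f` is `γ`-Hölder continuous on `s`. -/
def HolderWithExp {E : Type*} [NormedAddCommGroup E] (f : ℝ → E) (γ : ℝ) (s : Set ℝ) : Prop :=
  ∃ K : ℝ, ∀ x ∈ s, ∀ y ∈ s, ‖f x - f y‖ ≤ K * |x - y| ^ γ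


namespace Aux6
open ProbabilityTheory

/-- One dimensional version of the Gaussian hypothesis. -/
def G1 {Ω : Type*} [MeasurableSpace Ω] (P : Measure Ω) (H : ℝ) (X : Ω → ℝ → ℝ) : Prop :=
  (∀ t : ℝ, Measurable fun ω => X ω t) ∧
  ∀ (n : ℕ) (t : Fin n → ℝ) (a : Fin n → ℝ),
      (∀ j, t j ∈ Set.Icc (0 : ℝ) 1) →
      ∃ v : NNReal, (v : ℝ) = ∑ j, ∑ k, a j * a k * fbmCov H (t j) (t k) ∧
        MeasureTheory.Measure.map (fun ω => ∑ j, a j * X ω (t j)) P =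
          ProbabilityTheory.gaussianReal 0 v

lemma cov_self {H s : ℝ} (hH : 0 < H) : fbmCov H s s = |s| ^ (2 * H) := by
  unfold fbmCov
  rw [sub_self, abs_zero, Real.zero_rpow (by positivity)]
  ring

lemma cov_comm {H s t : ℝ} : fbmCov H s t = fbmCov H t s := by
  unfold fbmCov
  rw [abs_sub_comm]
  ring

/-- regression coefficient -/
noncomputable def kap (H s t t' : ℝ) : ℝ := (fbmCov H t s - fbmCov H t' s) / s ^ (2 * H)

lemma three {Ω : Type*} [MeasurableSpace Ω] {P : Measure Ω} {H : ℝ} (hH : 0 < H)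
    {X : Ω → ℝ → ℝ} (hX : G1 P H X) {s t t' : ℝ} (hs : s ∈ Icc (0:ℝ) 1) (hs0 : 0 < s)
    (ht : t ∈ Icc (0:ℝ) 1) (ht' : t' ∈ Icc (0:ℝ) 1) (α β : ℝ) :
    ∃ v : NNReal, (v : ℝ) = α ^ 2 * s ^ (2 * H) +
        β ^ 2 * (|t - t'| ^ (2 * H) - (kap H s t t') ^ 2 * s ^ (2 * H)) ∧
      Measure.map (fun ω => α * X ω s + β * (X ω t - X ω t' - kap H s t t' * X ω s)) P =
        gaussianReal 0 v := by
  obtain ⟨v, hv, hm⟩ := hX.2 3 ![s, t, t'] ![α - β * kap H s t t', β, -β] (by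
    intro j; fin_cases j <;> simp <;> first | exact hs | exact ht | exact ht')
  refine ⟨v, ?_, ?_⟩
  · rw [hv]
    simp only [Fin.sum_univ_three]
    simp only [Matrix.cons_val_zero, Matrix.cons_val_one, Matrix.cons_val]
    have h1 : fbmCov H s t = fbmCov H t s := cov_comm
    have h2 : fbmCov H s t' = fbmCov H t' s := cov_comm
    have h3 : fbmCov H t' t = fbmCov H t t' := cov_comm
    have h4 : fbmCov H t t + fbmCov H t' t' - 2 * fbmCov H t t' = |t - t'| ^ (2 * H) := by
      rw [cov_self hH, cov_self hH]
      unfold fbmCov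
      rw [abs_sub_comm]
      ring
    have hsp : 0 < s ^ (2 * H) := Real.rpow_pos_of_pos hs0 _
    have h5 : fbmCov H t s - fbmCov H t' s = kap H s t t' * s ^ (2 * H) := by
      unfold kap; field_simp
    have h6 : fbmCov H s s = s ^ (2 * H) := by rw [cov_self hH, abs_of_pos hs0]
    rw [h1, h2, h3, ← h4, h6]
    linear_combination (2 * α * β - 2 * β ^ 2 * kap H s t t') * h5
  · rw [← hm]
    congr 1
    funext ω
    simp only [Fin.sum_univ_three, Matrix.cons_val_zero, Matrix.cons_val_one, Matrix.cons_val]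
    ring

lemma law_s {Ω : Type*} [MeasurableSpace Ω] {P : Measure Ω} {H : ℝ} (hH : 0 < H)
    {X : Ω → ℝ → ℝ} (hX : G1 P H X) {s : ℝ} (hs : s ∈ Icc (0:ℝ) 1) (hs0 : 0 < s) :
    ∃ v : NNReal, (v : ℝ) = s ^ (2 * H) ∧
      Measure.map (fun ω => X ω s) P = gaussianReal 0 v := by
  obtain ⟨v, hv, hm⟩ := three hH hX hs hs0 hs hs 1 0
  exact ⟨v, by simpa using hv, by simpa using hm⟩

lemma indep_L {Ω : Type*} [MeasurableSpace Ω] {P : Measure Ω} [IsProbabilityMeasure P]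
    {H : ℝ} (hH : 0 < H)
    {X : Ω → ℝ → ℝ} (hX : G1 P H X) {s t t' : ℝ} (hs : s ∈ Icc (0:ℝ) 1) (hs0 : 0 < s)
    (ht : t ∈ Icc (0:ℝ) 1) (ht' : t' ∈ Icc (0:ℝ) 1) :
    ∃ v : NNReal, (v : ℝ) = |t - t'| ^ (2 * H) - (kap H s t t') ^ 2 * s ^ (2 * H) ∧
      Measure.map (fun ω => (X ω t - X ω t' - kap H s t t' * X ω s)) P = gaussianReal 0 v ∧
      IndepFun (fun ω => X ω s) (fun ω => (X ω t - X ω t' - kap H s t t' * X ω s)) P := by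
  obtain ⟨v, hv, hm⟩ := three hH hX hs hs0 ht ht' 0 1
  obtain ⟨u, hu, hm'⟩ := law_s hH hX hs hs0
  have hm1 : Measure.map (fun ω => (X ω t - X ω t' - kap H s t t' * X ω s)) P
    = gaussianReal 0 v := by simpa using hm
  have hv1 : (v : ℝ) = |t - t'| ^ (2 * H) - (kap H s t t') ^ 2 * s ^ (2 * H) := by
    simpa using hv
  have mX : ∀ r, Measurable fun ω => X ω r := hX.1
  have mL : Measurable (fun ω => (X ω t - X ω t' - kap H s t t' * X ω s)) :=
    ((mX t).sub (mX t')).sub ((mX s).const_mul _)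
  refine ⟨v, hv1, hm1, ?_⟩
  rw [indepFun_iff_charFun_prod (mX s).aemeasurable mL.aemeasurable]
  intro τ
  obtain ⟨w, hw, hmw⟩ := three hH hX hs hs0 ht ht' τ.ofLp.1 τ.ofLp.2
  have key : charFun (Measure.map (fun ω => WithLp.toLp 2
      (X ω s, (X ω t - X ω t' - kap H s t t' * X ω s))) P) τ =
      charFun (gaussianReal 0 w) 1 := by
    rw [← hmw]
    have m1 : Measurable (fun ω => WithLp.toLp 2
      (X ω s, (X ω t - X ω t' - kap H s t t' * X ω s))) := by
      have := (mX s).prodMk mL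
      fun_prop
    have m2 : Measurable (fun ω => τ.ofLp.1 * X ω s +
      τ.ofLp.2 * (X ω t - X ω t' - kap H s t t' * X ω s)) :=
      ((mX s).const_mul _).add (mL.const_mul _)
    rw [charFun_apply, charFun_apply, integral_map m1.aemeasurable (by fun_prop),
      integral_map m2.aemeasurable (by fun_prop)]
    congr 1
    funext ω
    congr 2
    simp [WithLp.prod_inner_apply]
  rw [key, hm1, hm', charFun_gaussianReal, charFun_gaussianReal, charFun_gaussianReal,
    ← Complex.exp_add]
  congr 1
  have : ((w : NNReal) : ℂ) = ((w : ℝ) : ℂ) := rfl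
  have hu' : ((u : NNReal) : ℂ) = ((u : ℝ) : ℂ) := rfl
  have hv' : ((v : NNReal) : ℂ) = ((v : ℝ) : ℂ) := rfl
  rw [this, hu', hv', hw, ← hv1, ← hu]
  push_cast
  ring

end Aux6

namespace Aux6
open ProbabilityTheory

lemma rpow_diff_le {H : ℝ} (hH : H ∈ Ioo (0:ℝ) 1) {a s t : ℝ} (ha : 0 < a) (hs : a ≤ s)
    (hst : s ≤ t) (ht : t ≤ 1) : t ^ H - s ^ H ≤ (1 - a) ^ (1 - H) * (t - s) ^ H := by
  have ht0 : 0 < t := by linarith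
  have hs0 : 0 < s := by linarith
  set q := s / t with hq
  have hq0 : 0 < q := by positivity
  have hq1 : q ≤ 1 := by rw [hq, div_le_one ht0]; exact hst
  have hqa : a ≤ q := by
    rw [hq, le_div_iff₀ ht0]; nlinarith
  have hs' : s = q * t := by rw [hq]; field_simp
  have h1 : s ^ H = q ^ H * t ^ H := by rw [hs', Real.mul_rpow hq0.le ht0.le]
  have h2 : (t - s) ^ H = (1 - q) ^ H * t ^ H := by
    rw [← Real.mul_rpow (by linarith) ht0.le]; congr 1; rw [hs']; ring
  have h3 : q ≤ q ^ H := by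
    conv_lhs => rw [← Real.rpow_one q]
    exact Real.rpow_le_rpow_of_exponent_ge hq0 hq1 hH.2.le
  have h4 : 1 - q ≤ (1 - a) ^ (1 - H) * (1 - q) ^ H := by
    have : (1 - q) = (1 - q) ^ (1 - H) * (1 - q) ^ H := by
      rcases hq1.eq_or_lt with h | h
      · rw [h]; simp [Real.zero_rpow hH.1.ne']
      · rw [← Real.rpow_add (by linarith)]; simp
    conv_lhs => rw [this]
    have h5 : (1 - q) ^ (1 - H) ≤ (1 - a) ^ (1 - H) :=
      Real.rpow_le_rpow (by linarith) (by linarith) (by linarith [hH.2])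
    exact mul_le_mul_of_nonneg_right h5 (Real.rpow_nonneg (by linarith) _)
  have htH : 0 < t ^ H := Real.rpow_pos_of_pos ht0 _
  rw [h1, h2]
  nlinarith

lemma rpow_diff_abs {H : ℝ} (hH : H ∈ Ioo (0:ℝ) 1) {a s t : ℝ} (ha : 0 < a)
    (hs : s ∈ Icc a 1) (ht : t ∈ Icc a 1) :
    |t ^ H - s ^ H| ≤ (1 - a) ^ (1 - H) * |t - s| ^ H := by
  rcases le_total s t with h | h
  · rw [abs_of_nonneg (sub_nonneg.2 (Real.rpow_le_rpow (by linarith [hs.1]) h hH.1.le)),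
      abs_of_nonneg (sub_nonneg.2 h)]
    exact rpow_diff_le hH ha hs.1 h ht.2
  · rw [abs_sub_comm, abs_sub_comm t s,
      abs_of_nonneg (sub_nonneg.2 (Real.rpow_le_rpow (by linarith [ht.1]) h hH.1.le)),
      abs_of_nonneg (sub_nonneg.2 h)]
    exact rpow_diff_le hH ha ht.1 h hs.2

lemma rpow_two_mul {x H : ℝ} (hx : 0 ≤ x) : x ^ (2 * H) = (x ^ H) ^ 2 := by
  rw [mul_comm, Real.rpow_mul hx]; norm_num

lemma kap_formula {H : ℝ} (hH : 0 < H) {s t : ℝ} (hs : 0 < s) (ht : 0 < t) :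
    kap H s t s = ((t ^ H) ^ 2 - (s ^ H) ^ 2 - (|t - s| ^ H) ^ 2) / (2 * (s ^ H) ^ 2) := by
  unfold kap
  rw [cov_self hH]
  unfold fbmCov
  rw [abs_of_pos hs, abs_of_pos ht, rpow_two_mul hs.le, rpow_two_mul ht.le,
    rpow_two_mul (abs_nonneg _), abs_sub_comm s t]
  have : 0 < s ^ H := Real.rpow_pos_of_pos hs _
  field_simp
  ring

lemma kap_bound {H : ℝ} (hH : H ∈ Ioo (0:ℝ) 1) {a : ℝ} (ha : 0 < a) :
    ∃ K : ℝ, 0 < K ∧ ∀ s ∈ Icc a 1, ∀ t ∈ Icc a 1, |kap H s t s| ≤ K * |t - s| ^ H := by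
  refine ⟨3 / (2 * (a ^ H) ^ 2), by positivity, fun s hs t ht => ?_⟩
  have hs0 : 0 < s := by linarith [hs.1]
  have ht0 : 0 < t := by linarith [ht.1]
  have ha1 : a ≤ 1 := hs.1.trans hs.2
  rw [kap_formula hH.1 hs0 ht0]
  have h1 := rpow_diff_abs hH ha hs ht
  have h2 : (1 - a) ^ (1 - H) ≤ 1 := Real.rpow_le_one (by linarith) (by linarith) (by linarith [hH.2])
  have hw1 : |t - s| ≤ 1 := by rw [abs_le]; constructor <;> linarith [hs.1, hs.2, ht.1, ht.2]
  have hu1 : s ^ H ≤ 1 := Real.rpow_le_one hs0.le hs.2 hH.1.le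
  have hv1 : t ^ H ≤ 1 := Real.rpow_le_one ht0.le ht.2 hH.1.le
  have hu0 : a ^ H ≤ s ^ H := Real.rpow_le_rpow ha.le hs.1 hH.1.le
  have ha0 : 0 < a ^ H := Real.rpow_pos_of_pos ha _
  have hv0 : 0 < t ^ H := Real.rpow_pos_of_pos ht0 _
  have hw : |t - s| ^ H ≤ 1 := Real.rpow_le_one (abs_nonneg _) hw1 hH.1.le
  have hw0 : 0 ≤ |t - s| ^ H := Real.rpow_nonneg (abs_nonneg _) _
  set u := s ^ H
  set v := t ^ H
  set w := |t - s| ^ H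
  set α := a ^ H
  have h3 : |v - u| ≤ w := h1.trans (by nlinarith)
  have hnum : |v ^ 2 - u ^ 2 - w ^ 2| ≤ 3 * w := by
    have := abs_le.1 h3
    rw [abs_le]; constructor <;> nlinarith
  rw [abs_div, abs_of_pos (by positivity : 0 < 2 * u ^ 2), div_mul_eq_mul_div]
  gcongr

lemma var_lower {H : ℝ} (hH : H ∈ Ioo (0:ℝ) 1) {a : ℝ} (ha : 0 < a) :
    ∃ c : ℝ, 0 < c ∧ ∀ s ∈ Icc a 1, ∀ t ∈ Icc a 1,
      c * (|t - s| ^ H) ^ 2 ≤ |t - s| ^ (2 * H) - (kap H s t s) ^ 2 * s ^ (2 * H) := by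
  by_cases ha1 : 1 < a
  · exact ⟨1, one_pos, fun s hs => absurd (hs.1.trans hs.2) (by linarith)⟩
  push Not at ha1
  set κ := (1 - a) ^ (1 - H) with hκ
  have hκ0 : 0 ≤ κ := Real.rpow_nonneg (by linarith) _
  have hκ1 : κ < 1 := Real.rpow_lt_one (by linarith) (by linarith) (by linarith [hH.2])
  have ha0 : 0 < a ^ H := Real.rpow_pos_of_pos ha _
  have hκ2 : 0 < 1 - κ ^ 2 := by nlinarith
  refine ⟨(1 - κ ^ 2) * (a ^ H) ^ 2 / 4, by positivity, fun s hs t ht => ?_⟩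
  have hs0 : 0 < s := by linarith [hs.1]
  have ht0 : 0 < t := by linarith [ht.1]
  rw [kap_formula hH.1 hs0 ht0, rpow_two_mul (abs_nonneg _), rpow_two_mul hs0.le]
  have h1 := rpow_diff_abs hH ha hs ht
  rw [← hκ] at h1
  have hu1 : s ^ H ≤ 1 := Real.rpow_le_one hs0.le hs.2 hH.1.le
  have hu0 : a ^ H ≤ s ^ H := Real.rpow_le_rpow ha.le hs.1 hH.1.le
  have hv0 : a ^ H ≤ t ^ H := Real.rpow_le_rpow ha.le ht.1 hH.1.le
  have hw0 : 0 ≤ |t - s| ^ H := Real.rpow_nonneg (abs_nonneg _) _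
  have hmax : |t - s| ^ H ≤ max (s ^ H) (t ^ H) := by
    rcases le_total s t with h | h
    · refine le_max_of_le_right (Real.rpow_le_rpow (abs_nonneg _) ?_ hH.1.le)
      rw [abs_of_nonneg (by linarith)]; linarith
    · refine le_max_of_le_left (Real.rpow_le_rpow (abs_nonneg _) ?_ hH.1.le)
      rw [abs_of_nonpos (by linarith)]; linarith
  set u := s ^ H
  set v := t ^ H
  set w := |t - s| ^ H
  set α := a ^ H
  have hu : 0 < u := by linarith
  have hA : (1 - κ ^ 2) * w ^ 2 ≤ w ^ 2 - (v - u) ^ 2 := by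
    have : (v - u) ^ 2 ≤ (κ * w) ^ 2 := sq_le_sq.2 (by
      rw [abs_of_nonneg (mul_nonneg hκ0 hw0)]; exact h1)
    nlinarith
  have hB : α ^ 2 ≤ (u + v) ^ 2 - w ^ 2 := by
    rcases le_max_iff.1 hmax with h | h <;> nlinarith
  have e : w ^ 2 - ((v ^ 2 - u ^ 2 - w ^ 2) / (2 * u ^ 2)) ^ 2 * u ^ 2 =
      (w ^ 2 - (v - u) ^ 2) * ((u + v) ^ 2 - w ^ 2) / (4 * u ^ 2) := by
    field_simp; ring
  rw [e, le_div_iff₀ (by positivity)]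
  have hAB : (1 - κ ^ 2) * w ^ 2 * α ^ 2 ≤ (w ^ 2 - (v - u) ^ 2) * ((u + v) ^ 2 - w ^ 2) := by
    apply mul_le_mul hA hB (by positivity)
    exact le_trans (by positivity) hA
  have hu2 : u ^ 2 ≤ 1 := by nlinarith
  have : 0 ≤ (1 - κ ^ 2) * w ^ 2 * α ^ 2 := by positivity
  nlinarith

lemma kap_cont {H : ℝ} (hH : 0 < H) (s : ℝ) : Continuous (fun t => kap H s t s) := by
  unfold kap fbmCov
  have : ∀ x : ℝ, x ≠ 0 ∨ 0 ≤ 2 * H := fun x => Or.inr (by positivity)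
  refine Continuous.div_const ?_ _
  refine Continuous.sub ?_ continuous_const
  refine Continuous.div_const ?_ _
  refine Continuous.sub (Continuous.add ?_ continuous_const) ?_
  · exact continuous_abs.rpow_const (fun x => Or.inr (by positivity))
  · exact (continuous_abs.comp (by fun_prop)).rpow_const (fun x => Or.inr (by positivity))

lemma kap_sub {H s t t' : ℝ} : kap H s t t' = kap H s t s - kap H s t' s := by
  unfold kap; ring

/-! Gaussian densities -/

lemma pdf_le {v : NNReal} (hv : v ≠ 0) (x : ℝ) : gaussianPDFReal 0 v x ≤ 1 / √v := by
  have hv0 : (0:ℝ) < v := by positivity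
  simp only [gaussianPDFReal_def]
  have h1 : Real.exp (-(x - 0) ^ 2 / (2 * v)) ≤ 1 := by
    apply Real.exp_le_one_iff.2
    apply div_nonpos_of_nonpos_of_nonneg (by nlinarith [sq_nonneg (x-0)]) (by positivity)
  have h2 : (√(2 * Real.pi * v))⁻¹ ≤ 1 / √v := by
    rw [one_div]
    apply inv_anti₀ (by positivity)
    apply Real.sqrt_le_sqrt
    nlinarith [Real.pi_gt_three]
  calc _ ≤ (√(2 * Real.pi * v))⁻¹ * 1 := by gcongr
    _ ≤ _ := by simpa using h2

lemma exp_pow_le (d : ℕ) {y : ℝ} (hy : 0 ≤ y) :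
    y ^ d * Real.exp (-(y ^ 2) / 2) ≤ 2 ^ d * d.factorial := by
  have h1 := Real.pow_div_factorial_le_exp (x := y ^ 2 / 2) (by positivity) d
  have e : Real.exp (-(y ^ 2) / 2) = (Real.exp (y ^ 2 / 2))⁻¹ := by rw [← Real.exp_neg]; ring_nf
  have hf : (1:ℝ) ≤ d.factorial := by exact_mod_cast Nat.one_le_iff_ne_zero.2 (Nat.factorial_ne_zero d)
  have h2 : (1:ℝ) ≤ 2 ^ d := one_le_pow₀ (by norm_num)
  rw [e, ← div_eq_mul_inv, div_le_iff₀ (Real.exp_pos _)]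
  rcases le_total y 1 with h | h
  · have : y ^ d ≤ 1 := pow_le_one₀ hy h
    have h3 : 1 ≤ Real.exp (y ^ 2 / 2) := Real.one_le_exp (by positivity)
    calc y ^ d ≤ 1 := this
      _ ≤ _ := by
        apply one_le_mul_of_one_le_of_one_le _ h3
        exact one_le_mul_of_one_le_of_one_le h2 hf
  · have h4 : (y ^ 2 / 2) ^ d = y ^ d * y ^ d / 2 ^ d := by
      rw [div_pow, ← pow_mul, mul_comm 2 d, pow_mul, sq]
    rw [h4, div_div, div_le_iff₀ (by positivity)] at h1
    have h5 : 1 ≤ y ^ d := one_le_pow₀ h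
    nlinarith

lemma pdf_far (d : ℕ) {v : NNReal} (hv : v ≠ 0) {x D : ℝ} (hD : 0 < D) (hx : D ≤ |x|) :
    gaussianPDFReal 0 v x ≤ 2 ^ d * d.factorial * (1 / √v * (√v / D) ^ d) := by
  have hv0 : (0:ℝ) < v := by positivity
  have hs : 0 < √(v:ℝ) := by positivity
  simp only [gaussianPDFReal_def]
  have h2 : (√(2 * Real.pi * v))⁻¹ ≤ 1 / √v := by
    rw [one_div]
    apply inv_anti₀ (by positivity)
    apply Real.sqrt_le_sqrt
    nlinarith [Real.pi_gt_three]
  have h1 : Real.exp (-(x - 0) ^ 2 / (2 * v)) ≤ 2 ^ d * d.factorial * (√v / D) ^ d := by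
    have h3 := exp_pow_le d (y := D / √v) (by positivity)
    have h4 : Real.exp (-(x - 0) ^ 2 / (2 * v)) ≤ Real.exp (-((D / √v) ^ 2) / 2) := by
      apply Real.exp_le_exp.2
      rw [div_pow, Real.sq_sqrt hv0.le, sub_zero]
      have : D ^ 2 ≤ x ^ 2 := by rw [← sq_abs x]; gcongr
      have e : -(D ^ 2 / (v:ℝ)) / 2 = - D ^ 2 / (2 * v) := by field_simp
      rw [e]
      gcongr
    refine h4.trans ?_
    have : (√v / D) ^ d = ((D / √v) ^ d)⁻¹ := by rw [← inv_pow, inv_div]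
    rw [this, ← div_eq_mul_inv, le_div_iff₀ (by positivity)]
    linarith
  calc _ ≤ 1 / √v * (2 ^ d * d.factorial * (√v / D) ^ d) := by gcongr
    _ = _ := by ring

lemma pdf_lower {v : NNReal} {m : ℝ} (hm : 0 < m) (hv : m ≤ v) (hv1 : (v:ℝ) ≤ 1) {x R : ℝ}
    (hx : |x| ≤ R) : Real.exp (-(R ^ 2) / (2 * m)) / 3 ≤ gaussianPDFReal 0 v x := by
  have hv0 : (0:ℝ) < v := by linarith
  simp only [gaussianPDFReal_def, sub_zero]
  have h1 : Real.exp (-(R ^ 2) / (2 * m)) ≤ Real.exp (-x ^ 2 / (2 * v)) := by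
    apply Real.exp_le_exp.2
    rw [neg_div, neg_div, neg_le_neg_iff]
    have : x ^ 2 ≤ R ^ 2 := by rw [← sq_abs x]; gcongr
    gcongr
  have h2 : 1 / 3 ≤ (√(2 * Real.pi * v))⁻¹ := by
    rw [one_div]
    apply inv_anti₀ (by positivity)
    rw [Real.sqrt_le_left (by norm_num)]
    nlinarith [Real.pi_lt_four, Real.pi_pos]
  rw [div_eq_mul_one_div, mul_comm]
  gcongr

lemma gauss_le {v : NNReal} (hv : v ≠ 0) {S : Set ℝ} {m : ℝ}
    (h : ∀ x ∈ S, gaussianPDFReal 0 v x ≤ m) :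
    gaussianReal 0 v S ≤ ENNReal.ofReal m * volume S := by
  rw [gaussianReal_apply 0 hv, ← setLIntegral_const]
  apply setLIntegral_mono measurable_const
  intro x hx
  exact ENNReal.ofReal_le_ofReal (h x hx)

lemma gauss_ge {v : NNReal} (hv : v ≠ 0) {S : Set ℝ} {m : ℝ}
    (h : ∀ x ∈ S, m ≤ gaussianPDFReal 0 v x) :
    ENNReal.ofReal m * volume S ≤ gaussianReal 0 v S := by
  rw [gaussianReal_apply 0 hv, ← setLIntegral_const]
  apply setLIntegral_mono (measurable_gaussianPDF 0 v)
  intro x hx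
  exact ENNReal.ofReal_le_ofReal (h x hx)

lemma gauss_lint {v : NNReal} (hv : v ≠ 0) (g : ℝ → ℝ≥0∞) (hg : Measurable g) :
    ∫⁻ x, g x ∂(gaussianReal 0 v) ≤ ENNReal.ofReal (1 / √v) * ∫⁻ x, g x := by
  rw [gaussianReal_of_var_ne_zero 0 hv, lintegral_withDensity_eq_lintegral_mul _
    (measurable_gaussianPDF 0 v) hg, ← lintegral_const_mul _ hg]
  apply lintegral_mono
  intro x
  exact mul_le_mul_left (ENNReal.ofReal_le_ofReal (pdf_le hv x)) _

lemma gauss_moment (p : ℕ) : ∃ C : ℝ, 0 < C ∧ ∀ v : NNReal,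
    ∫⁻ x, ENNReal.ofReal (|x| ^ p) ∂(gaussianReal 0 v) ≤ ENNReal.ofReal (C * (√v) ^ p) := by
  set A := ∫⁻ x, ENNReal.ofReal (|x| ^ p) ∂(gaussianReal 0 1) with hA
  have hfin : A ≠ ∞ := by
    have h := (memLp_id_gaussianReal (μ := 0) (v := 1) (p : NNReal)).integrable_norm_pow'
    have h' : Integrable (fun x : ℝ => |x| ^ p) (gaussianReal 0 1) := by simpa using h
    exact h'.lintegral_lt_top.ne
  refine ⟨A.toReal + 1, by positivity, fun v => ?_⟩
  have e : gaussianReal 0 v = (gaussianReal 0 1).map (fun x => √v * x) := by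
    rw [gaussianReal_map_const_mul]
    congr 1
    · simp
    · ext; simp
  rw [e, lintegral_map (by fun_prop) (by fun_prop)]
  have : ∀ x : ℝ, ENNReal.ofReal (|√v * x| ^ p) = ENNReal.ofReal ((√v) ^ p) * ENNReal.ofReal (|x| ^ p) := by
    intro x
    rw [← ENNReal.ofReal_mul (by positivity), abs_mul, mul_pow, abs_of_nonneg (Real.sqrt_nonneg _)]
  simp_rw [this]
  rw [lintegral_const_mul _ (by fun_prop), ← hA, mul_comm, ENNReal.ofReal_mul (by positivity)]
  gcongr
  rw [← ENNReal.ofReal_toReal hfin]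
  apply ENNReal.ofReal_le_ofReal
  simp

end Aux6

namespace Aux6
open ProbabilityTheory

lemma one_upper {Ω : Type*} [MeasurableSpace Ω] (P : Measure Ω) {H : ℝ} (hH : H ∈ Ioo (0:ℝ) 1)
    {a : ℝ} (ha : 0 < a) : ∃ C : ℝ, 0 < C ∧ ∀ X : Ω → ℝ → ℝ, G1 P H X → ∀ s ∈ Icc a 1,
      ∀ y ε : ℝ, 0 < ε → P {ω | |X ω s - y| < ε} ≤ ENNReal.ofReal (C * ε) := by
  have haH : 0 < a ^ H := Real.rpow_pos_of_pos ha _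
  refine ⟨2 / a ^ H, by positivity, fun X hX s hs y ε hε => ?_⟩
  have hs0 : 0 < s := by linarith [hs.1]
  obtain ⟨v, hv, hm⟩ := law_s hH.1 hX ⟨hs0.le, hs.2⟩ hs0
  have hsH : a ^ H ≤ s ^ H := Real.rpow_le_rpow ha.le hs.1 hH.1.le
  have hv0 : v ≠ 0 := by
    intro h; rw [h] at hv
    have : 0 < s ^ (2 * H) := Real.rpow_pos_of_pos hs0 _
    simp at hv; linarith
  have hsq : √(v:ℝ) = s ^ H := by
    rw [hv, rpow_two_mul hs0.le, Real.sqrt_sq (by linarith)]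
  have e : {ω | |X ω s - y| < ε} = (fun ω => X ω s) ⁻¹' (Metric.ball y ε) := by
    ext ω; simp [Real.dist_eq]
  rw [e, ← Measure.map_apply (hX.1 s) measurableSet_ball, hm]
  refine (gauss_le hv0 (m := 1 / a ^ H) ?_).trans ?_
  · intro x _
    refine (pdf_le hv0 x).trans ?_
    rw [hsq]
    exact one_div_le_one_div_of_le haH hsH
  · rw [Real.volume_ball, ← ENNReal.ofReal_mul (by positivity)]
    apply ENNReal.ofReal_le_ofReal
    apply le_of_eq; ring

lemma one_lower {Ω : Type*} [MeasurableSpace Ω] (P : Measure Ω) {H : ℝ} (hH : H ∈ Ioo (0:ℝ) 1)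
    {a : ℝ} (ha : 0 < a) (R : ℝ) : ∃ C : ℝ, 0 < C ∧ ∀ X : Ω → ℝ → ℝ, G1 P H X → ∀ s ∈ Icc a 1,
      ∀ y ε : ℝ, |y| ≤ R → 0 < ε → ε ≤ 1 → ENNReal.ofReal (C * ε) ≤ P {ω | |X ω s - y| < ε} := by
  have haH : 0 < a ^ (2 * H) := Real.rpow_pos_of_pos ha _
  refine ⟨Real.exp (-((R + 1) ^ 2) / (2 * a ^ (2 * H))) / 3 * 2, by positivity,
    fun X hX s hs y ε hy hε hε1 => ?_⟩
  have hs0 : 0 < s := by linarith [hs.1]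
  obtain ⟨v, hv, hm⟩ := law_s hH.1 hX ⟨hs0.le, hs.2⟩ hs0
  have hsH : a ^ (2 * H) ≤ v := by
    rw [hv]; exact Real.rpow_le_rpow ha.le hs.1 (by linarith [hH.1])
  have hv1 : (v:ℝ) ≤ 1 := by
    rw [hv]; exact Real.rpow_le_one hs0.le hs.2 (by linarith [hH.1])
  have hv0 : v ≠ 0 := by
    intro h; rw [h] at hsH; simp at hsH; linarith
  have e : {ω | |X ω s - y| < ε} = (fun ω => X ω s) ⁻¹' (Metric.ball y ε) := by
    ext ω; simp [Real.dist_eq]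
  rw [e, ← Measure.map_apply (hX.1 s) measurableSet_ball, hm]
  refine le_trans ?_ (gauss_ge hv0 (m := Real.exp (-((R + 1) ^ 2) / (2 * a ^ (2 * H))) / 3) ?_)
  · rw [Real.volume_ball, ← ENNReal.ofReal_mul (by positivity)]
    apply ENNReal.ofReal_le_ofReal
    apply le_of_eq; ring
  · intro x hx
    apply pdf_lower haH hsH hv1
    rw [Metric.mem_ball, Real.dist_eq] at hx
    have : |x| ≤ |x - y| + |y| := by simpa using abs_add_le (x - y) y
    linarith

lemma two_pt {Ω : Type*} [MeasurableSpace Ω] (P : Measure Ω) [IsProbabilityMeasure P]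
    {H : ℝ} (hH : H ∈ Ioo (0:ℝ) 1)
    {a : ℝ} (ha : 0 < a) (d : ℕ) : ∃ C K : ℝ, 0 < C ∧ 0 < K ∧
      (∀ s ∈ Icc a 1, ∀ t ∈ Icc a 1, |kap H s t s| ≤ K * |t - s| ^ H) ∧
      ∀ X : Ω → ℝ → ℝ, G1 P H X → ∀ s ∈ Icc a 1, ∀ t ∈ Icc a 1, s ≠ t → 
      ∀ y z ε : ℝ, 0 < ε → P {ω | |X ω s - y| < ε ∧ |X ω t - z| < ε} ≤
        ENNReal.ofReal (C * ε ^ 2 / |t - s| ^ H) ∧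
        ∀ D : ℝ, 0 < D → D + (2 + K) * ε ≤ |z - y - kap H s t s * y| →
        P {ω | |X ω s - y| < ε ∧ |X ω t - z| < ε} ≤
        ENNReal.ofReal (C * ε ^ 2 / |t - s| ^ H * (|t - s| ^ H / D) ^ d) := by
  obtain ⟨C1, hC1, hup⟩ := one_upper P hH ha
  obtain ⟨K, hK, hkap⟩ := kap_bound hH ha
  obtain ⟨c, hc, hvar⟩ := var_lower hH ha
  have hsc : 0 < √c := by positivity
  set C := C1 * (2 ^ d * d.factorial * (1 / √c) * (2 * (2 + K))) with hC
  have hf : (1:ℝ) ≤ d.factorial := by exact_mod_cast Nat.one_le_iff_ne_zero.2 (Nat.factorial_ne_zero d)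
  have h2 : (1:ℝ) ≤ 2 ^ d := one_le_pow₀ (by norm_num)
  have hfd : (1:ℝ) ≤ 2 ^ d * d.factorial := one_le_mul_of_one_le_of_one_le h2 hf
  refine ⟨C, K, by positivity, hK, hkap, fun X hX s hs t ht hst y z ε hε => ?_⟩
  have hs0 : 0 < s := by linarith [hs.1]
  have ht0 : 0 < t := by linarith [ht.1]
  have hw0 : 0 < |t - s| ^ H := Real.rpow_pos_of_pos (abs_pos.2 (sub_ne_zero.2 hst.symm)) _
  have hw1 : |t - s| ^ H ≤ 1 := Real.rpow_le_one (abs_nonneg _)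
    (by rw [abs_le]; constructor <;> linarith [hs.1, hs.2, ht.1, ht.2]) hH.1.le
  have hk := hkap s hs t ht
  obtain ⟨v, hv, hm, hind⟩ := indep_L hH.1 hX ⟨hs0.le, hs.2⟩ hs0 ⟨ht0.le, ht.2⟩ ⟨hs0.le, hs.2⟩
  have hvl := hvar s hs t ht
  rw [← hv] at hvl
  have hvu : (v:ℝ) ≤ (|t - s| ^ H) ^ 2 := by
    rw [hv, rpow_two_mul (abs_nonneg _)]
    have : 0 < s ^ (2 * H) := Real.rpow_pos_of_pos hs0 _
    nlinarith [mul_nonneg (sq_nonneg (kap H s t s)) this.le]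
  set w := |t - s| ^ H with hw
  set k := kap H s t s with hkd
  have hk1 : |k| ≤ K := hk.trans (by nlinarith)
  have hv0 : v ≠ 0 := by
    intro h; rw [h] at hvl
    have : 0 < c * w ^ 2 := by positivity
    simp at hvl; linarith
  have hsqu : √(v:ℝ) ≤ w := by
    rw [Real.sqrt_le_left hw0.le]; exact hvu
  have hsql : √c * w ≤ √(v:ℝ) := by
    apply Real.le_sqrt_of_sq_le
    rw [mul_pow, Real.sq_sqrt hc.le]; exact hvl
  have hsqv : 0 < √(v:ℝ) := lt_of_lt_of_le (by positivity) hsql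
  have hinv : 1 / √(v:ℝ) ≤ 1 / √c * (1 / w) := by
    rw [one_div_mul_one_div]
    exact one_div_le_one_div_of_le (by positivity) hsql
  have main : ∀ m : ℝ, 0 ≤ m → (∀ x ∈ Metric.ball (z - y - k * y) ((2 + K) * ε), gaussianPDFReal 0 v x ≤ m) →
      P {ω | |X ω s - y| < ε ∧ |X ω t - z| < ε} ≤
        ENNReal.ofReal (C1 * ε * (m * (2 * ((2 + K) * ε)))) := by
    intro m hm0 hpdf
    have mL : Measurable (fun ω => (X ω t - X ω s - k * X ω s)) :=
      ((hX.1 t).sub (hX.1 s)).sub ((hX.1 s).const_mul _)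
    have hsub : {ω | |X ω s - y| < ε ∧ |X ω t - z| < ε} ⊆
        (fun ω => X ω s) ⁻¹' (Metric.ball y ε) ∩
        (fun ω => (X ω t - X ω s - k * X ω s)) ⁻¹' (Metric.ball (z - y - k * y) ((2 + K) * ε)) := by
      rintro ω ⟨h1, h2⟩
      simp only [mem_inter_iff, mem_preimage, Metric.mem_ball, Real.dist_eq]
      refine ⟨h1, ?_⟩
      have e : X ω t - X ω s - k * X ω s - (z - y - k * y) =
          (X ω t - z) - (X ω s - y) - k * (X ω s - y) := by ring
      rw [e]
      have h3 : |k * (X ω s - y)| ≤ K * ε := by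
        rw [abs_mul]; gcongr
      calc _ ≤ |X ω t - z| + |X ω s - y| + |k * (X ω s - y)| :=
            (abs_sub _ _).trans (by gcongr; exact abs_sub _ _)
        _ < _ := by linarith
    refine (measure_mono hsub).trans ?_
    rw [hind.measure_inter_preimage_eq_mul _ _ measurableSet_ball measurableSet_ball,
      ENNReal.ofReal_mul (by positivity)]
    apply mul_le_mul'
    · have e : {ω | |X ω s - y| < ε} = (fun ω => X ω s) ⁻¹' (Metric.ball y ε) := by
        ext ω; simp [Real.dist_eq]
      rw [← e]; exact hup X hX s hs y ε hε
    · rw [← Measure.map_apply mL measurableSet_ball, hm]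
      refine (gauss_le hv0 hpdf).trans ?_
      rw [Real.volume_ball, ← ENNReal.ofReal_mul hm0]
  constructor
  · refine (main (1 / √v) (by positivity) (fun x _ => pdf_le hv0 x)).trans ?_
    apply ENNReal.ofReal_le_ofReal
    calc C1 * ε * (1 / √v * (2 * ((2 + K) * ε)))
        ≤ C1 * ε * ((1 / √c * (1 / w)) * (2 * ((2 + K) * ε))) := by gcongr
      _ = 1 * (C1 * (1 / √c * (2 * (2 + K))) * ε ^ 2 / w) := by ring
      _ ≤ (2 ^ d * d.factorial) * (C1 * (1 / √c * (2 * (2 + K))) * ε ^ 2 / w) := by gcongr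
      _ = _ := by rw [hC]; ring
  · intro D hD hDle
    refine (main (2 ^ d * d.factorial * (1 / √v * (√v / D) ^ d)) (by positivity) ?_).trans ?_
    · intro x hx
      apply pdf_far d hv0 hD
      rw [Metric.mem_ball, Real.dist_eq] at hx
      have : |z - y - k * y| ≤ |x - (z - y - k * y)| + |x| := by
        rw [abs_sub_comm x]; simpa using abs_add_le (z - y - k * y - x) x
      linarith
    · apply ENNReal.ofReal_le_ofReal
      calc C1 * ε * (2 ^ d * d.factorial * (1 / √v * (√v / D) ^ d) * (2 * ((2 + K) * ε)))
        ≤ C1 * ε * (2 ^ d * d.factorial * ((1 / √c * (1 / w)) * (w / D) ^ d) * (2 * ((2 + K) * ε))) := by gcongr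
        _ = _ := by rw [hC]; ring

end Aux6

namespace Aux6
open ProbabilityTheory

lemma norm_le_sum {d : ℕ} (v : EuclideanSpace ℝ (Fin d)) : ‖v‖ ≤ ∑ i, |v i| := by
  have h0 : 0 ≤ ∑ i, |v i| := Finset.sum_nonneg (fun i _ => abs_nonneg _)
  apply le_of_sq_le_sq _ h0
  rw [EuclideanSpace.norm_sq_eq]
  simp only [Real.norm_eq_abs]
  exact Finset.sum_sq_le_sq_sum_of_nonneg (fun i _ => abs_nonneg _)

lemma coord_le {d : ℕ} (v : EuclideanSpace ℝ (Fin d)) (i : Fin d) : |v i| ≤ ‖v‖ := by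
  simpa using PiLp.norm_apply_le v i

lemma coordG1 {Ω : Type*} [MeasurableSpace Ω] {P : Measure Ω} {H : ℝ} {d : ℕ}
    {B : Ω → ℝ → EuclideanSpace ℝ (Fin d)} (hB : IsFBM P H d B) (i : Fin d) :
    G1 P H (fun ω t => B ω t i) := by
  refine ⟨fun t => ?_, hB.gaussian i⟩
  have := hB.meas t
  fun_prop

lemma coord_prod {Ω : Type*} [MeasurableSpace Ω] {P : Measure Ω} {H : ℝ} {d : ℕ}
    {B : Ω → ℝ → EuclideanSpace ℝ (Fin d)} (hB : IsFBM P H d B) (S : Fin d → Set (ℝ → ℝ))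
    (hS : ∀ i, MeasurableSet (S i)) :
    P {ω | ∀ i, (fun t => B ω t i) ∈ S i} = ∏ i, P {ω | (fun t => B ω t i) ∈ S i} := by
  have h := hB.indep.measure_inter_preimage_eq_mul (S := Finset.univ) (sets := S) (fun i _ => hS i)
  rw [← show (⋂ i ∈ Finset.univ, (fun ω t => B ω t i) ⁻¹' S i) =
    {ω | ∀ i, (fun t => B ω t i) ∈ S i} by ext; simp]
  exact h

lemma bdd {H : ℝ} (hH : H ∈ Ioo (0:ℝ) 1) {d : ℕ} {a b : ℝ} (ha : 0 < a) (hab : a < b) (hb : b ≤ 1)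
    {f : ℝ → EuclideanSpace ℝ (Fin d)} {F : Set (EuclideanSpace ℝ (Fin d))}
    (hf : HolderWithExp f H (Icc a b)) (hF : IsCompact F) :
    ∃ R K : ℝ, 0 < R ∧ 0 < K ∧ (∀ s ∈ Icc a b, ∀ t ∈ Icc a b, ‖f s - f t‖ ≤ K * |s - t| ^ H) ∧
      ∀ s ∈ Icc a b, ∀ x ∈ F, ‖x - f s‖ ≤ R := by
  obtain ⟨K, hK⟩ := hf
  obtain ⟨R, hR⟩ := hF.isBounded.exists_norm_le
  have hK' : ∀ s ∈ Icc a b, ∀ t ∈ Icc a b, ‖f s - f t‖ ≤ (|K| + 1) * |s - t| ^ H := by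
    intro s hs t ht
    refine (hK s hs t ht).trans ?_
    have : 0 ≤ |s - t| ^ H := Real.rpow_nonneg (abs_nonneg _) _
    gcongr
    linarith [le_abs_self K]
  refine ⟨|R| + (|K| + 1) + ‖f a‖, |K| + 1, by positivity, by positivity, hK', ?_⟩
  intro s hs x hx
  have h1 := hR x hx
  have h2 := hK' s hs a ⟨le_rfl, hab.le⟩
  have h3 : |s - a| ^ H ≤ 1 := Real.rpow_le_one (abs_nonneg _)
    (by rw [abs_le]; constructor <;> linarith [hs.1, hs.2]) hH.1.le
  have h4 : ‖x - f s‖ ≤ ‖x‖ + ‖f s - f a‖ + ‖f a‖ := by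
    have : x - f s = x - (f s - f a) - f a := by abel
    rw [this]
    exact (norm_sub_le _ _).trans (by gcongr; exact norm_sub_le _ _)
  have h5 : (|K| + 1) * |s - a| ^ H ≤ (|K| + 1) * 1 := by gcongr
  linarith [le_abs_self R]

lemma ballSet_meas (s y ε : ℝ) : MeasurableSet {g : ℝ → ℝ | |g s - y| < ε} := by
  have : Measurable (fun g : ℝ → ℝ => |g s - y|) := by fun_prop
  exact this measurableSet_Iio

lemma first_lower {Ω : Type*} [MeasurableSpace Ω] (P : Measure Ω) [IsProbabilityMeasure P]
    {H : ℝ} (hH : H ∈ Ioo (0:ℝ) 1) {d : ℕ} (hd : 0 < d)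
    {B : Ω → ℝ → EuclideanSpace ℝ (Fin d)} (hB : IsFBM P H d B)
    {a : ℝ} (ha : 0 < a) (R : ℝ) :
    ∃ c : ℝ, 0 < c ∧ ∀ s ∈ Icc a 1, ∀ y : EuclideanSpace ℝ (Fin d), ‖y‖ ≤ R → ∀ ε : ℝ,
      0 < ε → ε ≤ 1 → ENNReal.ofReal ((c * ε) ^ d) ≤ P {ω | ‖B ω s - y‖ < ε} := by
  obtain ⟨C, hC, hlow⟩ := one_lower P hH ha R
  have hd' : (1:ℝ) ≤ d := by exact_mod_cast hd
  have hd0 : (0:ℝ) < d := by linarith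
  refine ⟨C / d, by positivity, fun s hs y hy ε hε hε1 => ?_⟩
  have hsub : {ω | ∀ i, (fun t => B ω t i) ∈ {g : ℝ → ℝ | |g s - y i| < ε / d}} ⊆
      {ω | ‖B ω s - y‖ < ε} := by
    intro ω h
    simp only [mem_setOf_eq] at h ⊢
    refine (norm_le_sum _).trans_lt ?_
    have : Nonempty (Fin d) := ⟨⟨0, hd⟩⟩
    have h2 : ∑ i, |(B ω s - y) i| < ∑ i : Fin d, ε / d :=
      Finset.sum_lt_sum_of_nonempty Finset.univ_nonempty (fun i _ => by simpa using h i)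
    refine h2.trans_le (le_of_eq ?_)
    simp; field_simp
  refine le_trans ?_ (measure_mono hsub)
  rw [coord_prod hB _ (fun i => ballSet_meas s (y i) (ε / d)), ENNReal.ofReal_pow (by positivity)]
  have : ENNReal.ofReal (C / d * ε) ^ d = ∏ i : Fin d, ENNReal.ofReal (C / d * ε) := by simp
  rw [this]
  apply Finset.prod_le_prod'
  intro i _
  have := hlow _ (coordG1 hB i) s hs (y i) (ε / d) ((coord_le y i).trans hy) (by positivity)
    (by rw [div_le_one hd0]; linarith)
  refine le_trans (le_of_eq ?_) this
  congr 1; ring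

lemma second_upper {Ω : Type*} [MeasurableSpace Ω] (P : Measure Ω) [IsProbabilityMeasure P]
    {H : ℝ} (hH : H ∈ Ioo (0:ℝ) 1) {d : ℕ} (hd : 0 < d)
    {B : Ω → ℝ → EuclideanSpace ℝ (Fin d)} (hB : IsFBM P H d B)
    {a b : ℝ} (ha : 0 < a) (hb : b ≤ 1) {f : ℝ → EuclideanSpace ℝ (Fin d)}
    {F : Set (EuclideanSpace ℝ (Fin d))} {R Kf : ℝ} (hR : 0 < R) (hKf : 0 < Kf)
    (hf : ∀ s ∈ Icc a b, ∀ t ∈ Icc a b, ‖f s - f t‖ ≤ Kf * |s - t| ^ H)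
    (hF : ∀ s ∈ Icc a b, ∀ x ∈ F, ‖x - f s‖ ≤ R) :
    ∃ C : ℝ, 0 < C ∧ ∀ p ∈ Icc a b ×ˢ F, ∀ q ∈ Icc a b ×ˢ F, 0 < parabolicDist H p q →
      ∀ ε : ℝ, 0 < ε → P {ω | ‖B ω p.1 - (p.2 - f p.1)‖ < ε ∧ ‖B ω q.1 - (q.2 - f q.1)‖ < ε} ≤
        ENNReal.ofReal ((C * ε ^ 2 / parabolicDist H p q) ^ d) := by
  obtain ⟨C1, hC1, hup⟩ := one_upper P hH ha
  obtain ⟨C2, K, hC2, hK, hkap, htwo⟩ := two_pt P hH ha d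
  have hd' : (1:ℝ) ≤ d := by exact_mod_cast hd
  have hd0 : (0:ℝ) < d := by linarith
  set Λ := 2 * d * (Kf + K * R + 2 + K) with hΛ
  have hΛ2 : 2 * d ≤ Λ := by
    rw [hΛ]; have : 0 < Kf + K * R + K := by positivity
    nlinarith
  have hΛ1 : 2 ≤ Λ := by linarith
  have hΛ0 : 0 < Λ := by linarith
  refine ⟨(C1 + C2) * Λ, by positivity, ?_⟩
  rintro ⟨s, x⟩ ⟨hs, hx⟩ ⟨t, x'⟩ ⟨ht, hx'⟩ hρ ε hε
  simp only at hs hx ht hx' ⊢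
  have hsI : s ∈ Icc a 1 := ⟨hs.1, hs.2.trans hb⟩
  have htI : t ∈ Icc a 1 := ⟨ht.1, ht.2.trans hb⟩
  have hρd : parabolicDist H (s, x) (t, x') = max (|t - s| ^ H) ‖x - x'‖ := by
    unfold parabolicDist; simp [abs_sub_comm, dist_eq_norm]
  rw [hρd] at hρ ⊢
  have hw0 : 0 ≤ |t - s| ^ H := Real.rpow_nonneg (abs_nonneg _) _
  set y := x - f s with hy
  set z := x' - f t with hz
  have hyR : ‖y‖ ≤ R := hF s hs x hx
  -- the product bound
  have hprod : ∀ U : ℝ, 0 ≤ U → (∀ i, P {ω | |B ω s i - y i| < ε ∧ |B ω t i - z i| < ε} ≤ ENNReal.ofReal U) →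
      P {ω | ‖B ω s - y‖ < ε ∧ ‖B ω t - z‖ < ε} ≤ ENNReal.ofReal (U ^ d) := by
    intro U hU h
    have hsub : {ω | ‖B ω s - y‖ < ε ∧ ‖B ω t - z‖ < ε} ⊆
        {ω | ∀ i, (fun t => B ω t i) ∈ {g : ℝ → ℝ | |g s - y i| < ε} ∩ {g : ℝ → ℝ | |g t - z i| < ε}} := by
      rintro ω ⟨h1, h2⟩ i
      exact ⟨by simpa using (coord_le _ i).trans_lt h1, by simpa using (coord_le _ i).trans_lt h2⟩
    refine (measure_mono hsub).trans ?_
    rw [coord_prod hB _ (fun i => (ballSet_meas s (y i) ε).inter (ballSet_meas t (z i) ε)),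
      ENNReal.ofReal_pow hU]
    have : ENNReal.ofReal U ^ d = ∏ i : Fin d, ENNReal.ofReal U := by simp
    rw [this]
    exact Finset.prod_le_prod' (fun i _ => h i)
  set w := |t - s| ^ H with hw
  set l := ‖x - x'‖ with hl
  have hl0 : 0 ≤ l := norm_nonneg _
  have fin : ∀ U : ℝ, 0 ≤ U → U * max w l ≤ (C1 + C2) * Λ * ε ^ 2 →
      ENNReal.ofReal (U ^ d) ≤ ENNReal.ofReal (((C1 + C2) * Λ * ε ^ 2 / max w l) ^ d) := by
    intro U hU h
    apply ENNReal.ofReal_le_ofReal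
    gcongr
    rw [le_div_iff₀ hρ]; exact h
  rcases le_or_gt l (Λ * w) with hc1 | hc1
  · have hwpos : 0 < w := by
      by_contra h
      have hw00 : w = 0 := le_antisymm (not_lt.1 h) hw0
      rw [hw00] at hc1 hρ
      have : l = 0 := le_antisymm (by simpa using hc1) hl0
      rw [this] at hρ; simp at hρ
    have hst : s ≠ t := by
      rintro rfl
      rw [hw] at hwpos; simp [Real.zero_rpow hH.1.ne'] at hwpos
    refine (hprod (C2 * ε ^ 2 / w) (by positivity)
      (fun i => (htwo _ (coordG1 hB i) s hsI t htI hst (y i) (z i) ε hε).1)).trans ?_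
    apply fin _ (by positivity)
    have : max w l ≤ Λ * w := max_le (by nlinarith) hc1
    calc C2 * ε ^ 2 / w * max w l ≤ C2 * ε ^ 2 / w * (Λ * w) := by gcongr
      _ = C2 * Λ * ε ^ 2 := by field_simp
      _ ≤ _ := by gcongr; linarith
  · have hlpos : 0 < l := lt_of_le_of_lt (by positivity) hc1
    have hmax : max w l = l := max_eq_right (by nlinarith)
    rcases le_or_gt l (Λ * ε) with hc2 | hc2
    · refine (hprod (C1 * ε) (by positivity) (fun i => ?_)).trans ?_
      · refine le_trans (measure_mono ?_) (hup _ (coordG1 hB i) s hsI (y i) ε hε)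
        rintro ω ⟨h1, _⟩; exact h1
      · apply fin _ (by positivity)
        rw [hmax]
        calc C1 * ε * l ≤ C1 * ε * (Λ * ε) := by gcongr
          _ = C1 * Λ * ε ^ 2 := by ring
          _ ≤ _ := by gcongr; linarith
    · by_cases hst : s = t
      · subst hst
        have : {ω | ‖B ω s - y‖ < ε ∧ ‖B ω s - z‖ < ε} = ∅ := by
          ext ω
          simp only [mem_setOf_eq, mem_empty_iff_false, iff_false, not_and, not_lt]
          intro h1
          by_contra! h2
          have e : x - x' = (B ω s - z) - (B ω s - y) := by rw [hy, hz]; abel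
          have : l ≤ ‖B ω s - z‖ + ‖B ω s - y‖ := by rw [hl, e]; exact norm_sub_le _ _
          nlinarith
        rw [this]; simp
      · have hwpos : 0 < w := Real.rpow_pos_of_pos (abs_pos.2 (sub_ne_zero.2 (Ne.symm hst))) _
        -- the good coordinate
        obtain ⟨i, hi⟩ : ∃ i, l / d ≤ |(x - x') i| := by
          by_contra! h
          have : Nonempty (Fin d) := ⟨⟨0, hd⟩⟩
          have h2 : ∑ i, |(x - x') i| < ∑ i : Fin d, l / d :=
            Finset.sum_lt_sum_of_nonempty Finset.univ_nonempty (fun i _ => h i)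
          have h3 := norm_le_sum (x - x')
          have h4 : ∑ i : Fin d, l / d = l := by simp; field_simp
          linarith
        have hkb : |kap H s t s| ≤ K * w := hkap s hsI t htI
        have hw0' : l / (2 * d) + (2 + K) * ε ≤ |z i - y i - kap H s t s * y i| := by
          have e : z i - y i - kap H s t s * y i =
            -((x - x') i) - ((f t - f s) i + kap H s t s * y i) := by
            simp [hy, hz]; ring
          have h1 : |(f t - f s) i| ≤ Kf * w := (coord_le _ i).trans (hf t ht s hs)
          have h2 : |kap H s t s * y i| ≤ K * w * R := by
            rw [abs_mul]
            exact mul_le_mul hkb ((coord_le y i).trans hyR) (abs_nonneg _) (by positivity)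
          have h3 : |(f t - f s) i + kap H s t s * y i| ≤ Kf * w + K * w * R :=
            (abs_add_le _ _).trans (by linarith)
          have h4 : |-((x - x') i)| - |(f t - f s) i + kap H s t s * y i| ≤
            |z i - y i - kap H s t s * y i| := by rw [e]; exact abs_sub_abs_le_abs_sub _ _
          rw [abs_neg] at h4
          have h5 : (Kf + K * R) * w + (2 + K) * ε ≤ (Kf + K * R + 2 + K) * (l / Λ) := by
            have hw' : w ≤ l / Λ := by rw [le_div_iff₀ hΛ0]; linarith
            have hε' : ε ≤ l / Λ := by rw [le_div_iff₀ hΛ0]; linarith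
            have q1 : (Kf + K * R) * w ≤ (Kf + K * R) * (l / Λ) := by gcongr
            have q2 : (2 + K) * ε ≤ (2 + K) * (l / Λ) := by gcongr
            linarith
          have h6 : (Kf + K * R + 2 + K) * (l / Λ) = l / (2 * d) := by
            rw [hΛ]; field_simp
          have h7 : l / d = l / (2 * d) + l / (2 * d) := by field_simp; ring
          linarith
        have hgood := (htwo _ (coordG1 hB i) s hsI t htI hst (y i) (z i) ε hε).2 (l / (2 * d))
          (by positivity) hw0'
        rw [← hw] at hgood
        have hsub : {ω | ‖B ω s - y‖ < ε ∧ ‖B ω t - z‖ < ε} ⊆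
            {ω | ∀ i, (fun t => B ω t i) ∈ {g : ℝ → ℝ | |g s - y i| < ε} ∩ {g : ℝ → ℝ | |g t - z i| < ε}} := by
          rintro ω ⟨h1, h2⟩ i
          exact ⟨by simpa using (coord_le _ i).trans_lt h1, by simpa using (coord_le _ i).trans_lt h2⟩
        refine (measure_mono hsub).trans ?_
        rw [coord_prod hB _ (fun i => (ballSet_meas s (y i) ε).inter (ballSet_meas t (z i) ε)),
          ← Finset.mul_prod_erase _ _ (Finset.mem_univ i)]
        have hrest : ∏ j ∈ Finset.univ.erase i, P {ω | (fun t => B ω t j) ∈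
            {g : ℝ → ℝ | |g s - y j| < ε} ∩ {g : ℝ → ℝ | |g t - z j| < ε}} ≤
            ENNReal.ofReal (C2 * ε ^ 2 / w) ^ (d - 1) := by
          have : ENNReal.ofReal (C2 * ε ^ 2 / w) ^ (d - 1) =
            ∏ j ∈ Finset.univ.erase i, ENNReal.ofReal (C2 * ε ^ 2 / w) := by simp
          rw [this]
          exact Finset.prod_le_prod' (fun j _ =>
            (htwo _ (coordG1 hB j) s hsI t htI hst (y j) (z j) ε hε).1)
        refine (mul_le_mul' hgood hrest).trans ?_
        rw [← ENNReal.ofReal_pow (by positivity), ← ENNReal.ofReal_mul (by positivity)]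
        have e : C2 * ε ^ 2 / w * (w / (l / (2 * d))) ^ d * (C2 * ε ^ 2 / w) ^ (d - 1) =
            (C2 * ε ^ 2 * (2 * d) / l) ^ d := by
          have : C2 * ε ^ 2 / w * (w / (l / (2 * d))) ^ d * (C2 * ε ^ 2 / w) ^ (d - 1) =
            (w / (l / (2 * d))) ^ d * ((C2 * ε ^ 2 / w) * (C2 * ε ^ 2 / w) ^ (d - 1)) := by ring
          rw [this, mul_pow_sub_one hd.ne', ← mul_pow]
          congr 1; field_simp
        rw [e]
        apply fin _ (by positivity)
        rw [hmax]
        calc C2 * ε ^ 2 * (2 * d) / l * l = C2 * (2 * d) * ε ^ 2 := by field_simp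
          _ ≤ _ := by gcongr; linarith

end Aux6

namespace Aux6
open ProbabilityTheory Filter Topology

lemma holder_cont {H : ℝ} (hH : H ∈ Ioo (0:ℝ) 1) {d : ℕ} {a b : ℝ}
    {f : ℝ → EuclideanSpace ℝ (Fin d)} {Kf : ℝ}
    (hf : ∀ s ∈ Icc a b, ∀ t ∈ Icc a b, ‖f s - f t‖ ≤ Kf * |s - t| ^ H) :
    ContinuousOn f (Icc a b) := by
  intro x hx
  unfold ContinuousWithinAt
  rw [tendsto_iff_norm_sub_tendsto_zero]
  have hc : Continuous (fun s : ℝ => Kf * |s - x| ^ H) :=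
    continuous_const.mul ((continuous_abs.comp (by fun_prop)).rpow_const (fun x => Or.inr hH.1.le))
  have h0 : Tendsto (fun s : ℝ => Kf * |s - x| ^ H) (𝓝[Icc a b] x) (𝓝 0) := by
    have := (hc.tendsto x).mono_left (nhdsWithin_le_nhds (s := Icc a b))
    simpa [Real.zero_rpow hH.1.ne'] using this
  refine squeeze_zero' (Eventually.of_forall (fun _ => norm_nonneg _)) ?_ h0
  filter_upwards [self_mem_nhdsWithin] with s hs
  exact hf s hs x hx

lemma cauchy {Ω : Type*} [MeasurableSpace Ω] (P : Measure Ω) (N : Ω → ℝ≥0∞) (hN : Measurable N) :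
    (∫⁻ ω, N ω ∂P) ^ 2 ≤ (∫⁻ ω, N ω * N ω ∂P) * P {ω | N ω ≠ 0} := by
  have mS : MeasurableSet {ω | N ω ≠ 0} := hN (measurableSet_singleton 0).compl
  have h := ENNReal.lintegral_mul_le_Lp_mul_Lq P Real.HolderConjugate.two_two
    hN.aemeasurable ((measurable_const (a := (1:ℝ≥0∞))).indicator mS).aemeasurable
  have e1 : ∀ ω, (N * ({ω | N ω ≠ 0}.indicator fun _ => (1:ℝ≥0∞)) : Ω → ℝ≥0∞) ω = N ω := by
    intro ω
    by_cases h : N ω = 0 <;> simp [h]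
  have e2 : ∀ ω, ({ω | N ω ≠ 0}.indicator (fun _ => (1:ℝ≥0∞)) ω) ^ (2:ℝ) =
      {ω | N ω ≠ 0}.indicator (fun _ => (1:ℝ≥0∞)) ω := by
    intro ω
    by_cases h : N ω = 0 <;> simp [h]
  have e3 : ∀ ω, N ω ^ (2:ℝ) = N ω * N ω := by
    intro ω
    rw [ENNReal.rpow_two, sq]
  simp_rw [e1, e2, e3] at h
  rw [lintegral_indicator_const mS, one_mul, ← ENNReal.mul_rpow_of_nonneg _ _ (by norm_num)] at h
  calc _ ≤ (((∫⁻ ω, N ω * N ω ∂P) * P {ω | N ω ≠ 0}) ^ (1 / 2 : ℝ)) ^ 2 := by gcongr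
    _ = _ := by rw [← ENNReal.rpow_natCast, ← ENNReal.rpow_mul]; norm_num

lemma lower_energy {Ω : Type*} [MeasurableSpace Ω] (P : Measure Ω) [IsProbabilityMeasure P]
    {H : ℝ} (hH : H ∈ Ioo (0:ℝ) 1) {d : ℕ} (hd : 0 < d)
    {B : Ω → ℝ → EuclideanSpace ℝ (Fin d)} (hB : IsFBM P H d B)
    {a b : ℝ} (ha : 0 < a) (hab : a < b) (hb : b ≤ 1) {f : ℝ → EuclideanSpace ℝ (Fin d)}
    {F : Set (EuclideanSpace ℝ (Fin d))} (hFc : IsCompact F) {R Kf : ℝ} (hR : 0 < R) (hKf : 0 < Kf)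
    (hf : ∀ s ∈ Icc a b, ∀ t ∈ Icc a b, ‖f s - f t‖ ≤ Kf * |s - t| ^ H)
    (hF : ∀ s ∈ Icc a b, ∀ x ∈ F, ‖x - f s‖ ≤ R) :
    ∃ κ : ℝ, 0 < κ ∧ ∀ E : Set ℝ, IsCompact E → E ⊆ Icc a b →
      ∀ μ : Measure (ℝ × EuclideanSpace ℝ (Fin d)), IsProbabilityMeasure μ → μ (E ×ˢ F)ᶜ = 0 →
      ENNReal.ofReal κ / energy (parabolicDist H) d μ ≤ P {ω | ∃ t ∈ E, B ω t + f t ∈ F} := by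
  obtain ⟨c1, hc1, hfirst⟩ := first_lower P hH hd hB ha R
  obtain ⟨C2, hC2, hsecond⟩ := second_upper P hH hd hB ha hb hR hKf hf hF
  refine ⟨(c1 ^ d) ^ 2 / C2 ^ d, by positivity, fun E hE hEI μ hμ hμE => ?_⟩
  have hfc : ContinuousOn f (Icc a b) := holder_cont hH hf
  set π : ℝ → ℝ := fun t => (projIcc a b hab.le t : ℝ) with hπ
  have hπc : Continuous π := continuous_subtype_val.comp continuous_projIcc
  have hπm : ∀ t, π t ∈ Icc a b := fun t => (projIcc a b hab.le t).2
  have hπe : ∀ t ∈ Icc a b, π t = t := fun t ht => by simp [hπ, projIcc_of_mem hab.le ht]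
  have hI01 : Icc a b ⊆ Icc 0 1 := Icc_subset_Icc ha.le hb
  have hfπ : Continuous (fun t => f (π t)) := hfc.comp_continuous hπc hπm
  have hBπ : ∀ ω, Continuous (fun t => B ω (π t)) := fun ω =>
    ((hB.cont ω).mono hI01).comp_continuous hπc hπm
  have hBm : Measurable (Function.uncurry (fun (t : ℝ) (ω : Ω) => B ω (π t))) :=
    measurable_uncurry_of_continuous_of_measurable (fun ω => hBπ ω) (fun t => hB.meas (π t))
  set g : Ω × (ℝ × EuclideanSpace ℝ (Fin d)) → ℝ :=
    fun z => ‖B z.1 (π z.2.1) - (z.2.2 - f (π z.2.1))‖ with hg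
  have hgm : Measurable g := by
    have h1 : Measurable (fun z : Ω × (ℝ × EuclideanSpace ℝ (Fin d)) => B z.1 (π z.2.1)) :=
      hBm.comp ((measurable_snd.fst).prodMk measurable_fst)
    have h2 : Measurable (fun z : Ω × (ℝ × EuclideanSpace ℝ (Fin d)) => f (π z.2.1)) :=
      hfπ.measurable.comp measurable_snd.fst
    exact (h1.sub (measurable_snd.snd.sub h2)).norm
  set T : ℝ → Set (Ω × (ℝ × EuclideanSpace ℝ (Fin d))) := fun ε => {z | g z < ε} with hT
  have hTm : ∀ ε, MeasurableSet (T ε) := fun ε => hgm measurableSet_Iio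
  set N : ℝ → Ω → ℝ≥0∞ := fun ε ω => μ (Prod.mk ω ⁻¹' T ε) with hN
  have hNm : ∀ ε, Measurable (N ε) := fun ε => measurable_measure_prodMk_left (hTm ε)
  have hae : ∀ᵐ p ∂μ, p ∈ E ×ˢ F := hμE
  have hsubE : ∀ p ∈ E ×ˢ F, p ∈ Icc a b ×ˢ F := fun p hp => ⟨hEI hp.1, hp.2⟩
  -- first moment
  have m1 : ∀ ε, 0 < ε → ε ≤ 1 → ENNReal.ofReal ((c1 * ε) ^ d) ≤ ∫⁻ ω, N ε ω ∂P := by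
    intro ε hε hε1
    rw [hN, ← Measure.prod_apply (hTm ε), Measure.prod_apply_symm (hTm ε)]
    calc ENNReal.ofReal ((c1 * ε) ^ d) = ∫⁻ p, ENNReal.ofReal ((c1 * ε) ^ d) ∂μ := by simp
      _ ≤ _ := by
        apply lintegral_mono_ae
        filter_upwards [hae] with p hp
        have hp' := hsubE p hp
        have := hfirst p.1 ⟨hp'.1.1, hp'.1.2.trans hb⟩ (p.2 - f p.1) (hF p.1 hp'.1 p.2 hp'.2) ε hε hε1
        refine this.trans (measure_mono ?_)
        intro ω hω
        simp only [hT, hg, mem_preimage]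
        show ‖B ω (π p.1) - (p.2 - f (π p.1))‖ < ε
        rw [hπe _ hp'.1]; exact hω
  -- second moment
  have m2 : ∀ ε, 0 < ε → ∫⁻ ω, N ε ω * N ε ω ∂P ≤
      ENNReal.ofReal ((C2 * ε ^ 2) ^ d) * energy (parabolicDist H) d μ := by
    intro ε hε
    set T2 : Set (Ω × ((ℝ × EuclideanSpace ℝ (Fin d)) × (ℝ × EuclideanSpace ℝ (Fin d)))) :=
      {z | (z.1, z.2.1) ∈ T ε} ∩ {z | (z.1, z.2.2) ∈ T ε} with hT2
    have hT2m : MeasurableSet T2 :=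
      ((measurable_fst.prodMk measurable_snd.fst) (hTm ε)).inter
        ((measurable_fst.prodMk measurable_snd.snd) (hTm ε))
    have e1 : ∀ ω, N ε ω * N ε ω = (μ.prod μ) (Prod.mk ω ⁻¹' T2) := by
      intro ω
      rw [hN, ← Measure.prod_prod]
      rfl
    simp_rw [e1]
    rw [← Measure.prod_apply hT2m, Measure.prod_apply_symm hT2m, lintegral_prod _
      (measurable_measure_prodMk_right hT2m).aemeasurable]
    unfold energy
    rw [← lintegral_const_mul' _ _ ENNReal.ofReal_ne_top]
    apply lintegral_mono_ae
    filter_upwards [hae] with p hp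
    rw [← lintegral_const_mul' _ _ ENNReal.ofReal_ne_top]
    apply lintegral_mono_ae
    filter_upwards [hae] with q hq
    have hp' := hsubE p hp
    have hq' := hsubE q hq
    have hd0 : (0:ℝ) < d := by exact_mod_cast hd
    rw [radialKernel, if_pos hd0]
    have hρ0 : 0 ≤ parabolicDist H p q := le_max_of_le_right dist_nonneg
    rcases hρ0.eq_or_lt with h0 | h0
    · rw [← h0, ENNReal.ofReal_zero, ENNReal.zero_rpow_of_neg (by linarith), ENNReal.mul_top]
      · exact le_top
      · simp only [ne_eq, ENNReal.ofReal_eq_zero, not_le]; positivity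
    · have h := hsecond p hp' q hq' h0 ε hε
      refine le_trans (measure_mono ?_) (h.trans (le_of_eq ?_))
      · rintro ω ⟨h1, h2⟩
        have h1' : ‖B ω (π p.1) - (p.2 - f (π p.1))‖ < ε := h1
        have h2' : ‖B ω (π q.1) - (q.2 - f (π q.1))‖ < ε := h2
        rw [hπe _ hp'.1] at h1'
        rw [hπe _ hq'.1] at h2'
        exact ⟨h1', h2'⟩
      · rw [div_pow, ENNReal.ofReal_div_of_pos (by positivity), ENNReal.rpow_neg,
          ENNReal.rpow_natCast, ← ENNReal.ofReal_pow h0.le, div_eq_mul_inv]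
  set En := energy (parabolicDist H) d μ with hEn
  -- combine
  have key : ∀ ε, 0 < ε → ε ≤ 1 → ENNReal.ofReal ((c1 ^ d) ^ 2 / C2 ^ d) ≤ En * P {ω | N ε ω ≠ 0} := by
    intro ε hε hε1
    have h := cauchy P (N ε) (hNm ε)
    have h1 : ENNReal.ofReal ((c1 * ε) ^ d) ^ 2 ≤
        ENNReal.ofReal ((C2 * ε ^ 2) ^ d) * En * P {ω | N ε ω ≠ 0} :=
      (pow_le_pow_left' (m1 ε hε hε1) 2).trans (h.trans (mul_le_mul_left (m2 ε hε) _))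
    have hpos : 0 < (C2 * ε ^ 2) ^ d := by positivity
    have e : ENNReal.ofReal ((c1 ^ d) ^ 2 / C2 ^ d) =
        ENNReal.ofReal ((c1 * ε) ^ d) ^ 2 / ENNReal.ofReal ((C2 * ε ^ 2) ^ d) := by
      rw [← ENNReal.ofReal_pow (by positivity), ← ENNReal.ofReal_div_of_pos hpos]
      congr 1
      rw [mul_pow, mul_pow, mul_pow, ← pow_mul ε, ← pow_mul ε, mul_comm d 2]
      field_simp
    rw [e]
    apply ENNReal.div_le_of_le_mul
    rw [mul_assoc] at h1
    exact h1.trans (le_of_eq (mul_comm _ _))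
  -- limit
  set ε : ℕ → ℝ := fun m => 1 / ((m:ℝ) + 1) with hε
  have hεpos : ∀ m, 0 < ε m := fun m => by positivity
  have hε1 : ∀ m, ε m ≤ 1 := fun m => by
    rw [hε]; simp only; rw [div_le_one (by positivity)]; linarith [(Nat.cast_nonneg m : (0:ℝ) ≤ m)]
  set S : ℕ → Set Ω := fun m => {ω | N (ε m) ω ≠ 0} with hS
  have hSm : ∀ m, MeasurableSet (S m) := fun m => hNm _ (measurableSet_singleton 0).compl
  set U : ℕ → Set Ω := fun n => ⋃ m ∈ Ici n, S m with hU
  have hUm : ∀ n, MeasurableSet (U n) := fun n =>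
    MeasurableSet.biUnion (to_countable _) (fun m _ => hSm m)
  have hUanti : Antitone U := fun i j hij => biUnion_subset_biUnion_left (Ici_subset_Ici.2 hij)
  have hlim := tendsto_measure_iInter_atTop (μ := P) (s := U) (fun n => (hUm n).nullMeasurableSet)
    hUanti ⟨0, measure_ne_top _ _⟩
  have hη : ENNReal.ofReal ((c1 ^ d) ^ 2 / C2 ^ d) / En ≤ P (⋂ n, U n) := by
    refine ge_of_tendsto' hlim (fun n => ?_)
    apply ENNReal.div_le_of_le_mul
    refine (key (ε n) (hεpos n) (hε1 n)).trans ?_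
    rw [mul_comm]
    exact mul_le_mul_left (measure_mono (subset_biUnion_of_mem (u := S) (mem_Ici.2 le_rfl))) _
  have hsub : (⋂ n, U n) ⊆ {ω | ∃ t ∈ E, B ω t + f t ∈ F} := by
    intro ω hω
    have hpt : ∀ n, ∃ m, n ≤ m ∧ ∃ t ∈ E, ∃ x ∈ F, ‖B ω t - (x - f t)‖ < ε m := by
      intro n
      have h1 := mem_iInter.1 hω n
      simp only [hU, mem_iUnion, mem_Ici] at h1
      obtain ⟨m, hnm, hm⟩ := h1
      refine ⟨m, hnm, ?_⟩
      by_contra! hcon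
      apply hm
      show μ (Prod.mk ω ⁻¹' T (ε m)) = 0
      refine measure_mono_null ?_ hμE
      intro p hp hpE
      have h2 : ‖B ω (π p.1) - (p.2 - f (π p.1))‖ < ε m := hp
      rw [hπe _ (hEI hpE.1)] at h2
      exact absurd h2 (not_lt.2 (hcon p.1 hpE.1 p.2 hpE.2))
    have hFne : F.Nonempty := by
      obtain ⟨_, _, _, _, x, hx, _⟩ := hpt 0; exact ⟨x, hx⟩
    have hEne : E.Nonempty := by
      obtain ⟨_, _, t, ht, _⟩ := hpt 0; exact ⟨t, ht⟩
    have hcont : ContinuousOn (fun t => Metric.infDist (B ω t + f t) F) E :=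
      (Metric.continuous_infDist_pt F).comp_continuousOn
        (((hB.cont ω).mono (hEI.trans hI01)).add (hfc.mono hEI))
    obtain ⟨t, ht, hmin⟩ := hE.exists_isMinOn hEne hcont
    refine ⟨t, ht, ?_⟩
    rw [hFc.isClosed.mem_iff_infDist_zero hFne]
    apply le_antisymm _ Metric.infDist_nonneg
    apply _root_.le_of_forall_pos_le_add
    intro δ hδ
    obtain ⟨n, hn⟩ := exists_nat_one_div_lt hδ
    obtain ⟨m, hnm, t', ht', x, hx, hlt⟩ := hpt n
    have h1 : Metric.infDist (B ω t + f t) F ≤ Metric.infDist (B ω t' + f t') F := hmin ht'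
    have h2 := Metric.infDist_le_dist_of_mem (x := B ω t' + f t') hx
    have h3 : dist (B ω t' + f t') x = ‖B ω t' - (x - f t')‖ := by
      rw [dist_eq_norm]; congr 1; abel
    have h4 : ε m ≤ 1 / ((n:ℝ) + 1) := by
      rw [hε]; simp only
      apply one_div_le_one_div_of_le (by positivity)
      have : (n:ℝ) ≤ m := by exact_mod_cast hnm
      linarith
    linarith
  exact hη.trans (measure_mono hsub)

end Aux6

namespace Aux6
open ProbabilityTheory Filter Topology

noncomputable def tt (u v : ℝ) (n k : ℕ) : ℝ := u + (v - u) * (k / 2 ^ n)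

lemma tt_mem {u v : ℝ} (huv : u ≤ v) {n k : ℕ} (hk : k ≤ 2 ^ n) : tt u v n k ∈ Icc u v := by
  have h1 : (0:ℝ) ≤ k / 2 ^ n := by positivity
  have h2 : (k:ℝ) / 2 ^ n ≤ 1 := by
    rw [div_le_one (by positivity)]; exact_mod_cast hk
  unfold tt
  constructor <;> nlinarith

lemma chain {W : ℝ → ℝ} {u v : ℝ} (huv : u ≤ v) (hW : ContinuousOn W (Icc u v)) (h0 : W u = 0)
    {A q : ℝ} (hA : 0 ≤ A) (hq0 : 0 ≤ q) (hq1 : q < 1)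
    (h : ∀ n k, k < 2 ^ n → |W (tt u v n (k+1)) - W (tt u v n k)| ≤ A * q ^ n) :
    ∀ t ∈ Icc u v, |W t| ≤ A * (1 - q)⁻¹ := by
  have claim : ∀ n k, k ≤ 2 ^ n → |W (tt u v n k)| ≤ A * ∑ i ∈ Finset.range (n+1), q ^ i := by
    intro n
    induction n with
    | zero =>
      intro k hk
      have hk' : k = 0 ∨ k = 1 := by simp at hk; omega
      rcases hk' with rfl | rfl
      · simp [tt, h0, hA]
      · have := h 0 0 (by norm_num)
        simp [tt, h0] at this ⊢
        exact this
    | succ n ih =>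
      intro k hk
      rw [Finset.sum_range_succ, mul_add]
      have hpos : 0 ≤ A * q ^ (n+1) := by positivity
      have e : ∀ j : ℕ, tt u v (n+1) (2*j) = tt u v n j := by
        intro j; unfold tt; push_cast; rw [pow_succ]; field_simp
      rw [pow_succ] at hk
      obtain ⟨j, rfl | rfl⟩ : ∃ j, k = 2 * j ∨ k = 2 * j + 1 := ⟨k / 2, by omega⟩
      · have := ih j (by omega)
        rw [e]; linarith
      · have h1 := ih j (by omega)
        have h2 := h (n+1) (2*j) (by rw [pow_succ]; omega)
        rw [e] at h2
        have h3 := abs_sub_abs_le_abs_sub (W (tt u v (n+1) (2*j+1))) (W (tt u v n j))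
        linarith
  have hs : ∀ n, ∑ i ∈ Finset.range (n+1), q ^ i ≤ (1-q)⁻¹ := by
    intro n
    rw [← tsum_geometric_of_lt_one hq0 hq1]
    exact (summable_geometric_of_lt_one hq0 hq1).sum_le_tsum _ (fun i _ => by positivity)
  intro t ht
  rcases huv.eq_or_lt with rfl | huv'
  · have : t = u := le_antisymm ht.2 ht.1
    rw [this, h0, abs_zero]
    have : 0 < 1 - q := by linarith
    positivity
  have hvu : 0 < v - u := by linarith
  set τ := (t - u) / (v - u) with hτ
  have hτ0 : 0 ≤ τ := div_nonneg (by linarith [ht.1]) hvu.le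
  have hτ1 : τ ≤ 1 := by rw [hτ, div_le_one hvu]; linarith [ht.2]
  have hpow : Tendsto (fun n : ℕ => (2:ℝ) ^ n) atTop atTop :=
    tendsto_pow_atTop_atTop_of_one_lt (by norm_num)
  have hfl := (tendsto_nat_floor_mul_div_atTop (R := ℝ) hτ0).comp hpow
  have hk : ∀ n : ℕ, ⌊τ * 2 ^ n⌋₊ ≤ 2 ^ n := by
    intro n
    apply Nat.floor_le_of_le
    push_cast
    have : (0:ℝ) < 2 ^ n := by positivity
    nlinarith
  have htl : Tendsto (fun n : ℕ => tt u v n ⌊τ * 2 ^ n⌋₊) atTop (𝓝 t) := by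
    have h1 := (hfl.const_mul (v - u)).const_add u
    have h2 : u + (v - u) * τ = t := by rw [hτ]; field_simp; ring
    rw [h2] at h1
    exact h1
  have htl' : Tendsto (fun n : ℕ => tt u v n ⌊τ * 2 ^ n⌋₊) atTop (𝓝[Icc u v] t) :=
    tendsto_nhdsWithin_iff.2 ⟨htl, Eventually.of_forall (fun n => tt_mem huv (hk n))⟩
  have hWl := ((hW t ht).tendsto.comp htl').abs
  refine le_of_tendsto' hWl (fun n => ?_)
  exact (claim n _ (hk n)).trans (mul_le_mul_of_nonneg_left (hs n) hA)

noncomputable def Wp (H u : ℝ) (h : ℝ → ℝ) (t : ℝ) : ℝ := h t - h u - kap H u t u * h u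

noncomputable def MM (H u v Q : ℝ) (p : ℕ) (h : ℝ → ℝ) : ℝ≥0∞ :=
  ∑' n : ℕ, ∑ k ∈ Finset.range (2 ^ n),
    ENNReal.ofReal ((Q ^ n) ^ p * |Wp H u h (tt u v n (k+1)) - Wp H u h (tt u v n k)| ^ p)

noncomputable def Sbad (H u v Q : ℝ) (p : ℕ) (y0 ρ : ℝ) : Set (ℝ → ℝ) :=
  {h | |h u - y0| < ρ} ∪ {h | 1 ≤ ENNReal.ofReal (2 * (4 * (1 - Q⁻¹)⁻¹ / ρ) ^ p) *
    (MM H u v Q p h * ENNReal.ofReal ((1 + ((h u - y0) / ρ) ^ 2)⁻¹))}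

lemma Wp_meas (H u t : ℝ) : Measurable (fun h : ℝ → ℝ => Wp H u h t) := by
  unfold Wp
  exact ((measurable_pi_apply t).sub (measurable_pi_apply u)).sub
    ((measurable_pi_apply u).const_mul _)

lemma MM_meas (H u v Q : ℝ) (p : ℕ) : Measurable (MM H u v Q p) := by
  unfold MM
  refine Measurable.ennreal_tsum (fun n => Finset.measurable_fun_sum _ (fun k _ => ?_))
  exact ((((Wp_meas _ _ _).sub (Wp_meas _ _ _)).abs.pow_const p).const_mul _).ennreal_ofReal

lemma Sbad_meas (H u v Q : ℝ) (p : ℕ) (y0 ρ : ℝ) : MeasurableSet (Sbad H u v Q p y0 ρ) := by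
  have hu : Measurable (fun h : ℝ → ℝ => h u) := measurable_pi_apply u
  refine MeasurableSet.union (measurableSet_lt (hu.sub_const y0).abs measurable_const) ?_
  refine measurableSet_le measurable_const (((MM_meas H u v Q p).mul ?_).const_mul _)
  exact ((((hu.sub_const y0).div_const ρ).pow_const 2).const_add 1).inv.ennreal_ofReal

lemma Wp_bound {H u v Q : ℝ} (hH : 0 < H) (hQ : 1 < Q) {p : ℕ} (hp : 0 < p) (huv : u ≤ v)
    {h : ℝ → ℝ} (hc : ContinuousOn h (Icc u v)) (hM : MM H u v Q p h ≠ ⊤) (t : ℝ)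
    (ht : t ∈ Icc u v) : |Wp H u h t| ^ p ≤ (MM H u v Q p h).toReal * ((1 - Q⁻¹)⁻¹) ^ p := by
  set m := (MM H u v Q p h).toReal with hm
  have hm0 : 0 ≤ m := ENNReal.toReal_nonneg
  have hQ0 : 0 < Q := by linarith
  have hp0 : p ≠ 0 := hp.ne'
  set A := m ^ ((p:ℝ)⁻¹) with hA
  have hA0 : 0 ≤ A := Real.rpow_nonneg hm0 _
  have hAp : A ^ p = m := Real.rpow_inv_natCast_pow hm0 hp0
  have hW : ContinuousOn (Wp H u h) (Icc u v) := by
    unfold Wp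
    exact (hc.sub continuousOn_const).sub ((kap_cont hH u).continuousOn.mul continuousOn_const)
  have hk0 : kap H u u u = 0 := by
    have := kap_sub (H := H) (s := u) (t := u) (t' := u)
    linarith
  have h0 : Wp H u h u = 0 := by simp [Wp, hk0]
  have hq1 : Q⁻¹ < 1 := inv_lt_one_of_one_lt₀ hQ
  have := chain huv hW h0 hA0 (inv_nonneg.2 hQ0.le) hq1 ?_ t ht
  · calc |Wp H u h t| ^ p ≤ (A * (1 - Q⁻¹)⁻¹) ^ p := by gcongr
      _ = _ := by rw [mul_pow, hAp]
  · intro n k hk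
    set D := |Wp H u h (tt u v n (k+1)) - Wp H u h (tt u v n k)| with hD
    have h1 : ENNReal.ofReal ((Q ^ n) ^ p * D ^ p) ≤ MM H u v Q p h := by
      refine le_trans ?_ (ENNReal.le_tsum n)
      exact Finset.single_le_sum
        (f := fun k => ENNReal.ofReal ((Q ^ n) ^ p * |Wp H u h (tt u v n (k+1)) - Wp H u h (tt u v n k)| ^ p))
        (fun _ _ => zero_le) (Finset.mem_range.2 hk)
    have h2 : (Q ^ n) ^ p * D ^ p ≤ m := (ENNReal.ofReal_le_iff_le_toReal hM).1 h1
    rw [← mul_pow, ← hAp] at h2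
    have h3 := le_of_pow_le_pow_left₀ hp0 hA0 h2
    rw [inv_pow, ← div_eq_mul_inv, le_div_iff₀ (by positivity)]
    linarith

lemma det {H u v Q : ℝ} (hH : 0 < H) (hQ : 1 < Q) {p : ℕ} (hp : 2 ≤ p) (huv : u ≤ v)
    {h g : ℝ → ℝ} (hc : ContinuousOn h (Icc u v)) {x r K Kf R : ℝ} (hr : 0 < r)
    (hK0 : 0 < K) (hKf : 0 < Kf) (hR0 : 0 < R)
    (hvu : (v - u) ^ H ≤ 4 * r) (hk : ∀ t ∈ Icc u v, |kap H u t u| ≤ K * |t - u| ^ H)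
    (hg : ∀ t ∈ Icc u v, |g t - g u| ≤ Kf * |t - u| ^ H) (hR : |x - g u| ≤ R)
    (hKr : 8 * K * r ≤ 1) (hex : ∃ t ∈ Icc u v, |h t + g t - x| < 2 * r) :
    h ∈ Sbad H u v Q p (x - g u) ((8 + 16 * K * R + 16 * Kf) * r) := by
  obtain ⟨t, ht, hlt⟩ := hex
  set C1 := 4 + 8 * K * R + 8 * Kf with hC1
  have hC1p : 0 < C1 := by positivity
  have e2 : (8 + 16 * K * R + 16 * Kf) * r = 2 * C1 * r := by rw [hC1]; ring
  rw [e2]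
  set ρ := 2 * C1 * r with hρ
  have hρ0 : 0 < ρ := by positivity
  set z := h u - (x - g u) with hz
  by_cases hzρ : |z| < ρ
  · exact Or.inl hzρ
  right
  push Not at hzρ
  rw [Set.mem_ofPred_eq, ← hz]
  by_cases hM : MM H u v Q p h = ⊤
  · rw [hM, ENNReal.top_mul, ENNReal.mul_top]
    · exact le_top
    · have : 0 < 1 - Q⁻¹ := by linarith [inv_lt_one_of_one_lt₀ hQ]
      simp only [ne_eq, ENNReal.ofReal_eq_zero, not_le]; positivity
    · simp only [ne_eq, ENNReal.ofReal_eq_zero, not_le]; positivity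
  have hS := Wp_bound hH hQ (by omega) huv hc hM t ht
  set S := |Wp H u h t| with hSd
  have htu : |t - u| ^ H ≤ 4 * r := by
    refine le_trans (Real.rpow_le_rpow (abs_nonneg _) ?_ hH.le) hvu
    rw [abs_of_nonneg (by linarith [ht.1])]; linarith [ht.2]
  have hkt : |kap H u t u| ≤ 4 * K * r := (hk t ht).trans (by nlinarith)
  have hgt : |g t - g u| ≤ 4 * Kf * r := (hg t ht).trans (by nlinarith)
  have hz4 : |z| ≤ 4 * S := by
    have e : z = (h t + g t - x) - Wp H u h t - kap H u t u * (z + (x - g u)) - (g t - g u) := by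
      simp only [hz, Wp]; ring
    have h1 : |kap H u t u * (z + (x - g u))| ≤ 1/2 * |z| + 4 * K * r * R := by
      rw [abs_mul]
      calc _ ≤ |kap H u t u| * (|z| + |x - g u|) := by gcongr; exact abs_add_le _ _
        _ = |kap H u t u| * |z| + |kap H u t u| * |x - g u| := by ring
        _ ≤ 1/2 * |z| + 4 * K * r * R := by
          gcongr
          linarith
    have h2 : |z| ≤ |h t + g t - x| + S + |kap H u t u * (z + (x - g u))| + |g t - g u| := by
      conv_lhs => rw [e]
      refine (abs_sub _ _).trans ?_
      gcongr
      refine (abs_sub _ _).trans ?_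
      gcongr
      exact abs_sub _ _
    have h3 : ρ = 8 * r + 16 * K * R * r + 16 * Kf * r := by rw [hρ, hC1]; ring
    nlinarith
  set m := (MM H u v Q p h).toReal with hm
  have hMm : MM H u v Q p h = ENNReal.ofReal m := (ENNReal.ofReal_toReal hM).symm
  have hm0 : 0 ≤ m := ENNReal.toReal_nonneg
  have hq : 0 < 1 - Q⁻¹ := by linarith [inv_lt_one_of_one_lt₀ hQ]
  rw [hMm, ← ENNReal.ofReal_mul hm0, ← ENNReal.ofReal_mul (by positivity), ← ENNReal.ofReal_one]
  apply ENNReal.ofReal_le_ofReal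
  set w := |z| / ρ with hw
  have hw1 : 1 ≤ w := by rw [hw, le_div_iff₀ hρ0]; linarith
  have hw2 : ((z) / ρ) ^ 2 = w ^ 2 := by rw [hw, div_pow, div_pow, sq_abs]
  rw [hw2]
  have hwp : w ^ 2 ≤ w ^ p := pow_le_pow_right₀ hw1 hp
  have h5 : w ^ p ≤ (4 * (1 - Q⁻¹)⁻¹ / ρ) ^ p * m := by
    calc w ^ p ≤ (4 * S / ρ) ^ p := by rw [hw]; gcongr
      _ = (4 / ρ) ^ p * S ^ p := by rw [← mul_pow]; congr 1; ring
      _ ≤ (4 / ρ) ^ p * (m * ((1 - Q⁻¹)⁻¹) ^ p) := by gcongr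
      _ = _ := by rw [mul_comm m, ← mul_assoc, ← mul_pow]; congr 2; ring
  rw [← mul_assoc, ← div_eq_mul_inv, le_div_iff₀ (by positivity)]
  nlinarith

end Aux6

namespace Aux6
open ProbabilityTheory Filter Topology

lemma EM {H : ℝ} (hH : H ∈ Ioo (0:ℝ) 1) {Q : ℝ} (hQ : 1 < Q) (hQ2 : Q ^ 2 = 2 ^ H) {p : ℕ}
    (hp : 2 < Q ^ p) : ∃ C : ℝ, 0 < C ∧ ∀ {Ω : Type*} [MeasurableSpace Ω] (P : Measure Ω)
    [IsProbabilityMeasure P] (X : Ω → ℝ → ℝ), G1 P H X → ∀ u v : ℝ, 0 < u → u ≤ v → v ≤ 1 →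
    ∀ φ : ℝ → ℝ≥0∞, Measurable φ →
    ∫⁻ ω, MM H u v Q p (X ω) * φ (X ω u) ∂P ≤
      ENNReal.ofReal (C * ((v - u) ^ H) ^ p) * ∫⁻ ω, φ (X ω u) ∂P := by
  obtain ⟨C, hC, hmom⟩ := gauss_moment p
  set l := 2 / Q ^ p with hl
  have hQ0 : 0 < Q := by linarith
  have hl0 : 0 < l := by positivity
  have hl1 : l < 1 := by rw [hl, div_lt_one (by positivity)]; exact hp
  have hl1' : 0 < 1 - l := by linarith
  refine ⟨C * (1 - l)⁻¹, by positivity, ?_⟩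
  intro Ω _ P _ X hX u v hu huv hv φ hφ
  have hXm := hX.1
  have hWm : ∀ t, Measurable (fun ω => Wp H u (X ω) t) := fun t =>
    ((hXm t).sub (hXm u)).sub ((hXm u).const_mul _)
  have hI : Icc u v ⊆ Icc 0 1 := Icc_subset_Icc hu.le hv
  have hu01 : u ∈ Icc (0:ℝ) 1 := ⟨hu.le, huv.trans hv⟩
  set J := ∫⁻ ω, φ (X ω u) ∂P with hJ
  have hVH : 0 ≤ (v - u) ^ H := Real.rpow_nonneg (by linarith) _
  -- single term
  have term : ∀ n k, k < 2 ^ n → ∫⁻ ω, ENNReal.ofReal ((Q ^ n) ^ p *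
      |Wp H u (X ω) (tt u v n (k+1)) - Wp H u (X ω) (tt u v n k)| ^ p) * φ (X ω u) ∂P ≤
      ENNReal.ofReal ((Q ^ n) ^ p * (C * ((v - u) ^ H / (2 ^ H) ^ n) ^ p)) * J := by
    intro n k hk
    set t := tt u v n (k+1) with ht
    set t' := tt u v n k with ht'
    have mt : t ∈ Icc (0:ℝ) 1 := hI (tt_mem huv hk)
    have mt' : t' ∈ Icc (0:ℝ) 1 := hI (tt_mem huv hk.le)
    obtain ⟨w, hw, hmap, hind⟩ := indep_L hH.1 hX hu01 hu mt mt'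
    have hDm : Measurable (fun ω => X ω t - X ω t' - kap H u t t' * X ω u) :=
      ((hXm t).sub (hXm t')).sub ((hXm u).const_mul _)
    have e : ∀ ω, Wp H u (X ω) t - Wp H u (X ω) t' = X ω t - X ω t' - kap H u t t' * X ω u := by
      intro ω; unfold Wp; rw [kap_sub (t := t) (t' := t')]; ring
    simp_rw [e]
    have hψ : Measurable (fun y : ℝ => ENNReal.ofReal ((Q ^ n) ^ p * |y| ^ p)) := by fun_prop
    have hind2 := hind.symm.comp hψ hφ
    have h1 := lintegral_mul_eq_lintegral_mul_lintegral_of_indepFun (hψ.comp hDm)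
      (hφ.comp (hXm u)) hind2
    have h2 : ∫⁻ ω, ENNReal.ofReal ((Q ^ n) ^ p * |X ω t - X ω t' - kap H u t t' * X ω u| ^ p) ∂P ≤
        ENNReal.ofReal ((Q ^ n) ^ p * (C * ((v - u) ^ H / (2 ^ H) ^ n) ^ p)) := by
      have h3 : ∫⁻ ω, ENNReal.ofReal ((Q ^ n) ^ p * |X ω t - X ω t' - kap H u t t' * X ω u| ^ p) ∂P
          = ∫⁻ y, ENNReal.ofReal ((Q ^ n) ^ p * |y| ^ p) ∂(gaussianReal 0 w) := by
        rw [← hmap, lintegral_map hψ hDm]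
      rw [h3]
      simp_rw [ENNReal.ofReal_mul (show 0 ≤ (Q ^ n) ^ p by positivity)]
      rw [lintegral_const_mul _ (by fun_prop)]
      gcongr
      refine (hmom w).trans (ENNReal.ofReal_le_ofReal ?_)
      gcongr
      have htt : |t - t'| = (v - u) / 2 ^ n := by
        have : t - t' = (v - u) / 2 ^ n := by
          rw [ht, ht']; unfold tt; push_cast; field_simp; ring
        rw [this, abs_of_nonneg (by have : 0 ≤ v - u := by linarith
                                    positivity)]
      have hH2 : |t - t'| ^ H = (v - u) ^ H / (2 ^ H) ^ n := by
        rw [htt, Real.div_rpow (by linarith) (by positivity), ← Real.rpow_natCast 2 n,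
          ← Real.rpow_natCast (2 ^ H) n, ← Real.rpow_mul (by norm_num), ← Real.rpow_mul (by norm_num),
          mul_comm H]
      rw [← hH2]
      apply Real.sqrt_le_iff.2
      refine ⟨Real.rpow_nonneg (abs_nonneg _) _, ?_⟩
      rw [← rpow_two_mul (abs_nonneg _), hw]
      have : 0 ≤ kap H u t t' ^ 2 * u ^ (2 * H) := by positivity
      linarith
    calc _ = _ := h1
      _ ≤ _ := mul_le_mul_left h2 _
  have hmeas : ∀ n k, Measurable (fun ω => ENNReal.ofReal ((Q ^ n) ^ p *
      |Wp H u (X ω) (tt u v n (k+1)) - Wp H u (X ω) (tt u v n k)| ^ p) * φ (X ω u)) := fun n k =>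
    ((((hWm _).sub (hWm _)).abs.pow_const p).const_mul _).ennreal_ofReal.mul (hφ.comp (hXm u))
  unfold MM
  simp_rw [← ENNReal.tsum_mul_right, Finset.sum_mul]
  rw [lintegral_tsum (fun n => (Finset.measurable_fun_sum _ (fun k _ => hmeas n k)).aemeasurable)]
  have hsum : ∀ n, ∫⁻ ω, ∑ k ∈ Finset.range (2 ^ n), ENNReal.ofReal ((Q ^ n) ^ p *
      |Wp H u (X ω) (tt u v n (k+1)) - Wp H u (X ω) (tt u v n k)| ^ p) * φ (X ω u) ∂P ≤
      ENNReal.ofReal (C * ((v - u) ^ H) ^ p * l ^ n) * J := by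
    intro n
    rw [lintegral_finsetSum _ (fun k _ => hmeas n k)]
    refine (Finset.sum_le_sum (fun k hk => term n k (Finset.mem_range.1 hk))).trans ?_
    rw [Finset.sum_const, Finset.card_range, nsmul_eq_mul, ← mul_assoc]
    apply mul_le_mul_left
    rw [← ENNReal.ofReal_natCast, ← ENNReal.ofReal_mul (by positivity)]
    apply ENNReal.ofReal_le_ofReal
    apply le_of_eq
    rw [← hQ2, hl]
    push_cast
    rw [div_pow, div_pow]
    generalize ((v - u) ^ H) ^ p = T
    rw [← pow_mul, ← pow_mul, ← pow_mul, ← pow_mul]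
    have : Q ^ (2 * (n * p)) = Q ^ (n * p) * Q ^ (p * n) := by rw [← pow_add]; congr 1; ring
    rw [this]
    field_simp
  refine (ENNReal.tsum_le_tsum hsum).trans ?_
  rw [ENNReal.tsum_mul_right]
  apply mul_le_mul_left
  rw [← ENNReal.ofReal_tsum_of_nonneg (fun n => by positivity)
    ((summable_geometric_of_lt_one hl0.le hl1).mul_left _), tsum_mul_left,
    tsum_geometric_of_lt_one hl0.le hl1]
  apply ENNReal.ofReal_le_ofReal
  apply le_of_eq; ring

lemma cauchy_int {ρ : ℝ} (hρ : 0 < ρ) (y0 : ℝ) :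
    ∫⁻ y, ENNReal.ofReal ((1 + ((y - y0) / ρ) ^ 2)⁻¹) = ENNReal.ofReal (ρ * Real.pi) := by
  have hi : Integrable (fun y : ℝ => (1 + ((y - y0) / ρ) ^ 2)⁻¹) :=
    (integrable_inv_one_add_sq.comp_div hρ.ne').comp_sub_right y0
  rw [← ofReal_integral_eq_lintegral_ofReal hi (Eventually.of_forall (fun y => by positivity))]
  congr 1
  rw [integral_sub_right_eq_self (fun y : ℝ => (1 + (y / ρ) ^ 2)⁻¹) y0,
    Measure.integral_comp_div (fun y : ℝ => (1 + y ^ 2)⁻¹) ρ, integral_univ_inv_one_add_sq, abs_of_pos hρ]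
  rfl

lemma Sbad_prob {Ω : Type*} [MeasurableSpace Ω] (P : Measure Ω) [IsProbabilityMeasure P]
    {H : ℝ} (hH : H ∈ Ioo (0:ℝ) 1) {Q : ℝ} (hQ : 1 < Q) (hQ2 : Q ^ 2 = 2 ^ H) {p : ℕ}
    (hp : 2 < Q ^ p) {a : ℝ} (ha : 0 < a) {D : ℝ} (hD : 0 < D) :
    ∃ C : ℝ, 0 < C ∧ ∀ X : Ω → ℝ → ℝ, G1 P H X → ∀ u v r y0 : ℝ, a ≤ u → u ≤ v → v ≤ 1 →
    0 < r → (v - u) ^ H ≤ 4 * r →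
    P {ω | X ω ∈ Sbad H u v Q p y0 (D * r)} ≤ ENNReal.ofReal (C * r) := by
  obtain ⟨C1, hC1, h1⟩ := one_upper P hH ha
  obtain ⟨C2, hC2, h2⟩ := EM hH hQ hQ2 hp
  have hq : 0 < 1 - Q⁻¹ := by linarith [inv_lt_one_of_one_lt₀ hQ]
  have haH : 0 < a ^ H := Real.rpow_pos_of_pos ha _
  set C3 := 2 * (4 * (1 - Q⁻¹)⁻¹ / D) ^ p * (C2 * 4 ^ p * (1 / a ^ H * (D * Real.pi))) with hC3
  have hC3p : 0 < C3 := by have := Real.pi_pos; positivity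
  refine ⟨C1 * D + C3, by positivity, fun X hX u v r y0 hau huv hv hr hvr => ?_⟩
  have hu0 : 0 < u := ha.trans_le hau
  have hu1 : u ∈ Icc a 1 := ⟨hau, huv.trans hv⟩
  set ρ := D * r with hρ
  have hρ0 : 0 < ρ := by positivity
  set φ : ℝ → ℝ≥0∞ := fun y => ENNReal.ofReal ((1 + ((y - y0) / ρ) ^ 2)⁻¹) with hφ
  have hφm : Measurable φ := by
    exact ((((measurable_id.sub_const y0).div_const ρ).pow_const 2).const_add 1).inv.ennreal_ofReal
  set c := ENNReal.ofReal (2 * (4 * (1 - Q⁻¹)⁻¹ / ρ) ^ p) with hc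
  have hsub : {ω | X ω ∈ Sbad H u v Q p y0 ρ} ⊆
      {ω | |X ω u - y0| < ρ} ∪ {ω | 1 ≤ c * (MM H u v Q p (X ω) * φ (X ω u))} := fun ω hω => hω
  have hXm : Measurable X := measurable_pi_iff.2 hX.1
  have hgm : Measurable (fun ω => MM H u v Q p (X ω) * φ (X ω u)) :=
    ((MM_meas H u v Q p).comp hXm).mul (hφm.comp (hX.1 u))
  have hA := h1 X hX u hu1 y0 ρ hρ0
  have hB : P {ω | 1 ≤ c * (MM H u v Q p (X ω) * φ (X ω u))} ≤ ENNReal.ofReal (C3 * r) := by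
    have hmk := mul_meas_ge_le_lintegral (μ := P) (hgm.const_mul c) 1
    rw [one_mul] at hmk
    refine hmk.trans ?_
    rw [lintegral_const_mul _ hgm]
    obtain ⟨w, hw, hmap⟩ := law_s hH.1 hX ⟨hu0.le, hu1.2⟩ hu0
    have huH : a ^ H ≤ u ^ H := Real.rpow_le_rpow ha.le hau hH.1.le
    have hsq : √(w:ℝ) = u ^ H := by
      rw [hw, rpow_two_mul hu0.le, Real.sqrt_sq (by positivity)]
    have hw0 : w ≠ 0 := by
      rintro rfl
      simp at hsq
      linarith
    have hE : ∫⁻ ω, φ (X ω u) ∂P ≤ ENNReal.ofReal (1 / a ^ H * (ρ * Real.pi)) := by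
      rw [← lintegral_map (g := fun ω => X ω u) hφm (hX.1 u), hmap]
      refine (gauss_lint hw0 φ hφm).trans ?_
      rw [hφ, cauchy_int hρ0 y0, ← ENNReal.ofReal_mul (by positivity), hsq]
      apply ENNReal.ofReal_le_ofReal
      have := Real.pi_pos
      gcongr
    have hM := h2 P X hX u v hu0 huv hv φ hφm
    calc _ ≤ c * (ENNReal.ofReal (C2 * (4 * r) ^ p) * ENNReal.ofReal (1 / a ^ H * (ρ * Real.pi))) := by
          gcongr
          refine hM.trans ?_
          gcongr
      _ = ENNReal.ofReal (C3 * r) := by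
          have := Real.pi_pos
          rw [hc, ← ENNReal.ofReal_mul (by positivity), ← ENNReal.ofReal_mul (by positivity)]
          congr 1
          rw [hC3, hρ, div_pow, div_pow, mul_pow D, mul_pow 4 r]
          field_simp
  calc _ ≤ _ := measure_mono hsub
    _ ≤ _ := measure_union_le _ _
    _ ≤ ENNReal.ofReal (C1 * ρ) + ENNReal.ofReal (C3 * r) := add_le_add hA hB
    _ = _ := by
      rw [← ENNReal.ofReal_add (by positivity) (by positivity)]
      congr 1; rw [hρ]; ring

end Aux6

namespace Aux6
open ProbabilityTheory Filter Topology

lemma ball_prob {Ω : Type*} [MeasurableSpace Ω] (P : Measure Ω) [IsProbabilityMeasure P]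
    {H : ℝ} (hH : H ∈ Ioo (0:ℝ) 1) {d : ℕ}
    {B : Ω → ℝ → EuclideanSpace ℝ (Fin d)} (hB : IsFBM P H d B)
    {a b : ℝ} (ha : 0 < a) (hb : b ≤ 1) {f : ℝ → EuclideanSpace ℝ (Fin d)}
    {F : Set (EuclideanSpace ℝ (Fin d))} {R Kf : ℝ} (hR : 0 < R) (hKf : 0 < Kf)
    (hf : ∀ s ∈ Icc a b, ∀ t ∈ Icc a b, ‖f s - f t‖ ≤ Kf * |s - t| ^ H)
    (hF : ∀ s ∈ Icc a b, ∀ x ∈ F, ‖x - f s‖ ≤ R) :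
    ∃ C r0 : ℝ, 0 < C ∧ 0 < r0 ∧ ∀ t0 ∈ Icc a b, ∀ x0 ∈ F, ∀ r, 0 < r → r ≤ r0 →
      P {ω | ∃ t ∈ Icc a b, |t - t0| ^ H < 2 * r ∧ ‖B ω t + f t - x0‖ < 2 * r} ≤
        ENNReal.ofReal ((C * r) ^ d) := by
  obtain ⟨K, hK, hkap⟩ := kap_bound hH ha
  set Q : ℝ := 2 ^ (H / 2) with hQ
  have hQ1 : 1 < Q := Real.one_lt_rpow (by norm_num) (by linarith [hH.1])
  have hQ2 : Q ^ 2 = 2 ^ H := by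
    rw [hQ, ← Real.rpow_natCast, ← Real.rpow_mul (by norm_num)]; congr 1; push_cast; ring
  obtain ⟨p0, hp0⟩ := pow_unbounded_of_one_lt 2 hQ1
  set p := p0 + 2 with hp
  have hp2 : 2 ≤ p := by omega
  have hpQ : 2 < Q ^ p := hp0.trans_le (pow_le_pow_right₀ hQ1.le (by omega))
  set D := 8 + 16 * K * R + 16 * Kf with hD
  have hDp : 0 < D := by positivity
  obtain ⟨C, hC, hprob⟩ := Sbad_prob P hH hQ1 hQ2 hpQ ha hDp
  refine ⟨C, 1 / (8 * K), hC, by positivity, fun t0 ht0 x0 hx0 r hr hr0 => ?_⟩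
  have hKr : 8 * K * r ≤ 1 := by
    rw [le_div_iff₀ (by positivity)] at hr0; linarith
  set L := (2 * r) ^ (H⁻¹) with hL
  have hL0 : 0 < L := by positivity
  have hLH : L ^ H = 2 * r := Real.rpow_inv_rpow (by positivity) hH.1.ne'
  set u := max a (t0 - L) with hu
  set v := min b (t0 + L) with hv
  have hau : a ≤ u := le_max_left _ _
  have hut : u ≤ t0 := max_le ht0.1 (by linarith)
  have htv : t0 ≤ v := le_min ht0.2 (by linarith)
  have huv : u ≤ v := hut.trans htv
  have hvb : v ≤ b := min_le_left _ _
  have hvuL : v - u ≤ 2 * L := by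
    have h1 : t0 - L ≤ u := le_max_right _ _
    have h2 : v ≤ t0 + L := min_le_right _ _
    linarith
  have hvu : (v - u) ^ H ≤ 4 * r := by
    calc (v - u) ^ H ≤ (2 * L) ^ H := Real.rpow_le_rpow (by linarith) hvuL hH.1.le
      _ = 2 ^ H * (2 * r) := by rw [Real.mul_rpow (by norm_num) hL0.le, hLH]
      _ ≤ 2 ^ (1:ℝ) * (2 * r) := by
        gcongr
        · norm_num
        · exact hH.2.le
      _ = 4 * r := by rw [Real.rpow_one]; ring
  have hsubI : Icc u v ⊆ Icc a b := Icc_subset_Icc hau hvb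
  have hu_mem : u ∈ Icc a b := ⟨hau, huv.trans hvb⟩
  have hsub : {ω | ∃ t ∈ Icc a b, |t - t0| ^ H < 2 * r ∧ ‖B ω t + f t - x0‖ < 2 * r} ⊆
      {ω | ∀ i, (fun t => B ω t i) ∈ Sbad H u v Q p (x0 i - f u i) (D * r)} := by
    rintro ω ⟨t, ht, htr, hlt⟩ i
    have htL : |t - t0| ≤ L := by
      rw [← Real.rpow_le_rpow_iff (abs_nonneg _) hL0.le hH.1, hLH]; exact htr.le
    have htJ : t ∈ Icc u v := by
      rw [abs_le] at htL
      exact ⟨max_le ht.1 (by linarith), le_min ht.2 (by linarith)⟩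
    have hBc : ContinuousOn (fun t => B ω t i) (Icc u v) := by
      have h1 : ContinuousOn (fun t => B ω t) (Icc u v) :=
        (hB.cont ω).mono (hsubI.trans (Icc_subset_Icc ha.le hb))
      fun_prop
    refine det (g := fun t => f t i) hH.1 hQ1 hp2 huv hBc hr hK hKf hR hvu ?_ ?_ ?_ hKr ⟨t, htJ, ?_⟩
    · intro s hs
      exact hkap u ⟨hau, hu_mem.2.trans hb⟩ s ⟨(hsubI hs).1, (hsubI hs).2.trans hb⟩
    · intro s hs
      have := coord_le (f s - f u) i
      exact le_trans (by simpa using this) (hf s (hsubI hs) u hu_mem)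
    · have := coord_le (x0 - f u) i
      exact le_trans (by simpa using this) (hF u hu_mem x0 hx0)
    · have := coord_le (B ω t + f t - x0) i
      exact lt_of_le_of_lt (by simpa using this) hlt
  refine (measure_mono hsub).trans ?_
  rw [coord_prod hB _ (fun i => Sbad_meas _ _ _ _ _ _ _)]
  refine (Finset.prod_le_prod' (fun i _ =>
    hprob _ (coordG1 hB i) u v r (x0 i - f u i) hau huv (hvb.trans hb) hr hvu)).trans ?_
  rw [Finset.prod_const, Finset.card_univ, Fintype.card_fin, ENNReal.ofReal_pow (by positivity)]

lemma upper {Ω : Type*} [MeasurableSpace Ω] (P : Measure Ω) [IsProbabilityMeasure P]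
    {H : ℝ} (hH : H ∈ Ioo (0:ℝ) 1) {d : ℕ}
    {B : Ω → ℝ → EuclideanSpace ℝ (Fin d)} (hB : IsFBM P H d B)
    {a b : ℝ} (ha : 0 < a) (hb : b ≤ 1) {f : ℝ → EuclideanSpace ℝ (Fin d)}
    {F : Set (EuclideanSpace ℝ (Fin d))} {R Kf : ℝ} (hR : 0 < R) (hKf : 0 < Kf)
    (hf : ∀ s ∈ Icc a b, ∀ t ∈ Icc a b, ‖f s - f t‖ ≤ Kf * |s - t| ^ H)
    (hF : ∀ s ∈ Icc a b, ∀ x ∈ F, ‖x - f s‖ ≤ R) :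
    ∃ c : ℝ, 0 < c ∧ ∀ E : Set ℝ, E ⊆ Icc a b →
      P {ω | ∃ t ∈ E, B ω t + f t ∈ F} ≤
          ENNReal.ofReal c * hMeasure (parabolicDist H) d (E ×ˢ F) := by
  obtain ⟨C, r0, hC, hr0, hball⟩ := ball_prob P hH hB ha hb hR hKf hf hF
  refine ⟨(C / 2) ^ d, by positivity, fun E hE => ?_⟩
  have hc0 : 0 < (C / 2) ^ d := by positivity
  rw [mul_comm]
  rw [← ENNReal.div_le_iff_le_mul (Or.inl (by simpa using hc0)) (Or.inl ENNReal.ofReal_ne_top)]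
  unfold hMeasure
  refine le_trans ?_ (le_iSup₂ r0 hr0)
  refine le_iInf fun c => le_iInf fun r => le_iInf fun hr => le_iInf fun hcov => ?_
  rw [ENNReal.div_le_iff_le_mul (Or.inl (by simpa using hc0)) (Or.inl ENNReal.ofReal_ne_top)]
  rw [← ENNReal.tsum_mul_right]
  set A : ℕ → Set Ω := fun n =>
    {ω | ∃ t ∈ E, B ω t + f t ∈ F ∧ parabolicDist H (t, B ω t + f t) (c n) < r n} with hA
  have hsub : {ω | ∃ t ∈ E, B ω t + f t ∈ F} ⊆ ⋃ n, A n := by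
    rintro ω ⟨t, ht, hx⟩
    have := hcov (show (t, B ω t + f t) ∈ E ×ˢ F from ⟨ht, hx⟩)
    obtain ⟨n, hn⟩ := mem_iUnion.1 this
    exact mem_iUnion.2 ⟨n, t, ht, hx, hn⟩
  refine (measure_mono hsub).trans ((measure_iUnion_le _).trans (ENNReal.tsum_le_tsum fun n => ?_))
  obtain ⟨hrn, hrn0⟩ := hr n
  have e : ENNReal.ofReal ((2 * r n) ^ (d:ℝ)) * ENNReal.ofReal ((C / 2) ^ d) =
      ENNReal.ofReal ((C * r n) ^ d) := by
    rw [Real.rpow_natCast, ← ENNReal.ofReal_mul (by positivity), ← mul_pow]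
    congr 2; ring
  rw [e]
  rcases (A n).eq_empty_or_nonempty with h0 | ⟨ω0, t0, ht0, hx0, hd0⟩
  · rw [h0, measure_empty]; exact zero_le
  refine le_trans (measure_mono ?_) (hball t0 (hE ht0) _ hx0 (r n) hrn hrn0)
  rintro ω ⟨t, ht, hx, hd⟩
  unfold parabolicDist at hd hd0
  obtain ⟨h1, h2⟩ := max_lt_iff.1 hd
  obtain ⟨h3, h4⟩ := max_lt_iff.1 hd0
  refine ⟨t, hE ht, ?_, ?_⟩
  · have h5 : |t - t0| ≤ |t - (c n).1| + |t0 - (c n).1| := by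
      have := abs_sub_le t (c n).1 t0
      rwa [abs_sub_comm (c n).1 t0] at this
    calc |t - t0| ^ H ≤ (|t - (c n).1| + |t0 - (c n).1|) ^ H :=
          Real.rpow_le_rpow (abs_nonneg _) h5 hH.1.le
      _ ≤ |t - (c n).1| ^ H + |t0 - (c n).1| ^ H :=
          Real.rpow_add_le_add_rpow (abs_nonneg _) (abs_nonneg _) hH.1.le hH.2.le
      _ < 2 * r n := by simp only at h1 h3; linarith
  · rw [← dist_eq_norm]
    have := dist_triangle_right (B ω t + f t) (B ω0 t0 + f t0) (c n).2
    simp only at h2 h4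
    linarith

lemma lower {Ω : Type*} [MeasurableSpace Ω] (P : Measure Ω) [IsProbabilityMeasure P]
    {H : ℝ} (hH : H ∈ Ioo (0:ℝ) 1) {d : ℕ} (hd : 0 < d)
    {B : Ω → ℝ → EuclideanSpace ℝ (Fin d)} (hB : IsFBM P H d B)
    {a b : ℝ} (ha : 0 < a) (hab : a < b) (hb : b ≤ 1) {f : ℝ → EuclideanSpace ℝ (Fin d)}
    {F : Set (EuclideanSpace ℝ (Fin d))} (hFc : IsCompact F) {R Kf : ℝ} (hR : 0 < R) (hKf : 0 < Kf)
    (hf : ∀ s ∈ Icc a b, ∀ t ∈ Icc a b, ‖f s - f t‖ ≤ Kf * |s - t| ^ H)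
    (hF : ∀ s ∈ Icc a b, ∀ x ∈ F, ‖x - f s‖ ≤ R) :
    ∃ κ : ℝ, 0 < κ ∧ ∀ E : Set ℝ, IsCompact E → E ⊆ Icc a b →
      ENNReal.ofReal κ * capacity (parabolicDist H) d (E ×ˢ F) ≤
        P {ω | ∃ t ∈ E, B ω t + f t ∈ F} := by
  obtain ⟨κ, hκ, h⟩ := lower_energy P hH hd hB ha hab hb hFc hR hKf hf hF
  refine ⟨κ, hκ, fun E hE hEI => ?_⟩
  unfold capacity
  simp_rw [ENNReal.inv_iInf, ENNReal.mul_iSup]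
  refine iSup_le fun μ => iSup_le fun hμ => iSup_le fun hμ0 => ?_
  have := h E hE hEI μ hμ hμ0
  rwa [div_eq_mul_inv] at this

end Aux6

/-- Theorem 3.1: hitting-probability estimates for `B^H + f` with an
`H`-Hölder drift `f`, in terms of capacity and Hausdorff measure of `E × F` in the
parabolic metric: `c⁻¹ C^d_{ρ_H}(E×F) ≤ ℙ((B^H+f)(E) ∩ F ≠ ∅) ≤ c ℋ^d_{ρ_H}(E×F)`,
where `c ≥ 1` depends only on `I`, `F`, `H` and `f`. -/
theorem statement6 {Ω : Type*} [MeasurableSpace Ω] (ℙ : Measure Ω) [IsProbabilityMeasure ℙ]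
    (H : ℝ) (hH : H ∈ Set.Ioo (0 : ℝ) 1) (d : ℕ) (hd : 0 < d)
    (B : Ω → ℝ → EuclideanSpace ℝ (Fin d)) (hB : IsFBM ℙ H d B)
    (a b : ℝ) (ha : 0 < a) (hab : a < b) (hb : b ≤ 1)
    (f : ℝ → EuclideanSpace ℝ (Fin d)) (hf : HolderWithExp f H (Set.Icc a b))
    (F : Set (EuclideanSpace ℝ (Fin d))) (hF : IsCompact F) :
    ∃ c : ℝ, 1 ≤ c ∧ ∀ E : Set ℝ, IsCompact E → E ⊆ Set.Icc a b →
      (ENNReal.ofReal c)⁻¹ * capacity (parabolicDist H) d (E ×ˢ F) ≤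
          ℙ {ω | ∃ t ∈ E, B ω t + f t ∈ F} ∧
        ℙ {ω | ∃ t ∈ E, B ω t + f t ∈ F} ≤
          ENNReal.ofReal c * hMeasure (parabolicDist H) d (E ×ˢ F) := by
  obtain ⟨R, K, hR, hK, hf', hF'⟩ := Aux6.bdd hH ha hab hb hf hF
  obtain ⟨κ, hκ, hlow⟩ := Aux6.lower ℙ hH hd hB ha hab hb hF hR hK hf' hF'
  obtain ⟨c2, hc2, hup⟩ := Aux6.upper ℙ hH hB ha hb hR hK hf' hF'
  refine ⟨max 1 (max κ⁻¹ c2), le_max_left _ _, fun E hE hEI => ⟨?_, ?_⟩⟩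
  · refine le_trans (mul_le_mul_left ?_ _) (hlow E hE hEI)
    rw [← ENNReal.ofReal_inv_of_pos (lt_of_lt_of_le one_pos (le_max_left _ _))]
    apply ENNReal.ofReal_le_ofReal
    exact inv_le_of_inv_le₀ hκ ((le_max_left _ _).trans (le_max_right _ _))
  · refine (hup E hEI).trans (mul_le_mul_left (ENNReal.ofReal_le_ofReal ?_) _)
    exact (le_max_right _ _).trans (le_max_right _ _)
end
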